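/- arXiv:2005.11879 — 2 statements merged into one kernel-verified Lean document; each statement's English description precedes it below -/
import Mathlib

section
/- Let X ∈ ℝ^{d×n} be deterministic and (ε,B)-orthonormal with ε < 1/λ_σ, let W ∈ ℝ^{ď×d} have i.i.d. N(0,1) entries, and let X̌ = σ(WX)/√ď have columns x̌₁,…,x̌_n, where σ is twice differentiable with |σ'|,|σ''| ≤ λ_σ, E[σ(ξ)]=0, E[σ(ξ)²]=1 for ξ ~ N(0,1). Then there are universal constants C, c > 0 such that, with probability at least 1 − 2n²e^{−c ď ε²}, simultaneously for all α ≠ β ∈ {1,…,n}: |‖x̌_α‖² − 1| ≤ Cλ_σ²ε and |x̌_αᵀx̌_β| ≤ Cλ_σ²ε. -/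
/-!
Lemma (concentration of columns of `X̌ = σ(WX)/√ď`): with probability at least
`1 − 2n²e^{−cďε²}`, all squared column norms are `Cλ_σ²ε`-close to `1` and all pairwise
inner products are bounded by `Cλ_σ²ε`.
-/

open MeasureTheory ProbabilityTheory Filter Topology Matrix

noncomputable abbrev stdGaussian : Measure ℝ := gaussianReal 0 1

noncomputable abbrev gaussianVec (d : ℕ) : Measure (Fin d → ℝ) :=
  Measure.pi fun _ => stdGaussian

noncomputable abbrev gaussianMat (a b : ℕ) : Measure (Fin a → Fin b → ℝ) :=
  Measure.pi fun _ => gaussianVec b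

/-- ℓ₂→ℓ₂ operator norm of a real matrix. -/
noncomputable def opNorm {m n : ℕ} (X : Matrix (Fin m) (Fin n) ℝ) : ℝ :=
  ‖LinearMap.toContinuousLinearMap (Matrix.toEuclideanLin X)‖

/-- `(ε,B)`-orthonormality of the columns of a matrix. -/
def IsOrthonormal {d n : ℕ} (ε B : ℝ) (X : Matrix (Fin d) (Fin n) ℝ) : Prop :=
  (∀ α : Fin n, |(∑ i, X i α ^ 2) - 1| ≤ ε) ∧
  (∀ α β : Fin n, α ≠ β → |∑ i, X i α * X i β| ≤ ε) ∧
  opNorm X ≤ B ∧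
  ∑ α : Fin n, ((∑ i, X i α ^ 2) - 1) ^ 2 ≤ B ^ 2

/-!
The entries of the Gram matrix of `X̌` are averages over the rows `w` of `W` of
`σ(wᵀx_α) σ(wᵀx_β)`, where `(wᵀx_α, wᵀx_β)` is a Gaussian vector whose covariance is within `ε` of
that of `(g, h)` or `(g, g)` for independent standard Gaussians `g`, `h`. With `K` the Lipschitz
constant of `σ`, the mean of the Gram matrix is within `O(K²ε)` of the identity: rescaling `wᵀx_α`
to unit variance costs `O(ε)` by the Lipschitz bound, and for `α ≠ β` replacing `wᵀx_β` by its
regression residual on `wᵀx_α`, which is independent of `wᵀx_α`, makes the expectation factor.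
Since `|σ(u) σ(v)| ≤ K² (2 + u² + v²)`, the summands are sub-exponential at scale `K²`, and
Bernstein's inequality with a union bound over the `n²` entries gives the concentration.
-/

theorem exp_le_one_add_add_sq_mul_exp_abs (s : ℝ) :
    Real.exp s ≤ 1 + s + s ^ 2 * Real.exp |s| := by
  have taylor := Complex.norm_exp_sub_sum_le_norm_mul_exp (s : ℂ) 2
  have remainder_eq : Complex.exp s - ∑ m ∈ Finset.range 2, (s : ℂ) ^ m / m.factorial =
      ((Real.exp s - (1 + s) : ℝ) : ℂ) := by
    simp [Finset.sum_range_succ]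
  rw [remainder_eq, Complex.norm_real, Complex.norm_real, Real.norm_eq_abs, Real.norm_eq_abs,
    sq_abs] at taylor
  linarith [le_abs_self (Real.exp s - (1 + s))]

theorem exp_mul_le_one_add_add_mul_exp_abs_div {K t : ℝ} (hK : 0 < K)
    (ht : |t| ≤ 1 / (2 * K)) (x : ℝ) :
    Real.exp (t * x) ≤ 1 + t * x + 8 * K ^ 2 * t ^ 2 * Real.exp (|x| / K) := by
  have hexp : Real.exp |t * x| ≤ Real.exp (|x| / (2 * K)) := by
    rw [abs_mul, div_eq_inv_mul, ← one_div]
    gcongr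
  have hsq : x ^ 2 ≤ 8 * K ^ 2 * Real.exp (|x| / (2 * K)) := by
    have h := Real.quadratic_le_exp_of_nonneg (x := |x| / (2 * K)) (by positivity)
    calc x ^ 2 = 8 * K ^ 2 * ((|x| / (2 * K)) ^ 2 / 2) := by
          rw [div_pow, sq_abs]; field_simp; norm_num
      _ ≤ 8 * K ^ 2 * Real.exp (|x| / (2 * K)) := by
          gcongr
          linarith [show 0 ≤ |x| / (2 * K) by positivity]
  calc Real.exp (t * x) ≤ 1 + t * x + (t * x) ^ 2 * Real.exp |t * x| :=
        exp_le_one_add_add_sq_mul_exp_abs _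
    _ ≤ 1 + t * x +
          t ^ 2 * (8 * K ^ 2 * Real.exp (|x| / (2 * K))) * Real.exp (|x| / (2 * K)) := by
        rw [mul_pow]; gcongr
    _ = 1 + t * x +
          8 * K ^ 2 * t ^ 2 * (Real.exp (|x| / (2 * K)) * Real.exp (|x| / (2 * K))) := by ring
    _ = 1 + t * x + 8 * K ^ 2 * t ^ 2 * Real.exp (|x| / K) := by
        rw [← Real.exp_add, ← two_mul, mul_div_assoc', mul_div_mul_left _ _ two_ne_zero]

/-- A sub-exponential random variable: its Orlicz norm for `ψ₁(u) = exp u - 1` is at most `K`.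
Only `0 < K` is meaningful; for `K = 0` the exponent is `|X ω| / 0 = 0`. -/
structure IsSubExponential {Ω : Type*} [MeasurableSpace Ω] (X : Ω → ℝ) (K : ℝ) (P : Measure Ω) :
    Prop where
  aemeasurable : AEMeasurable X P
  integrable_exp : Integrable (fun ω ↦ Real.exp (|X ω| / K)) P
  integral_exp_le : ∫ ω, Real.exp (|X ω| / K) ∂P ≤ 2

namespace IsSubExponential

variable {Ω Ω' : Type*} [MeasurableSpace Ω] [MeasurableSpace Ω'] {P : Measure Ω}
  {P' : Measure Ω'} {X : Ω → ℝ} {K t : ℝ}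

theorem neg (hX : IsSubExponential X K P) : IsSubExponential (-X) K P where
  aemeasurable := hX.aemeasurable.neg
  integrable_exp := by simpa using hX.integrable_exp
  integral_exp_le := by simpa using hX.integral_exp_le

theorem comp_measurePreserving (hX : IsSubExponential X K P) {f : Ω' → Ω}
    (hf : MeasurePreserving f P' P) : IsSubExponential (X ∘ f) K P' where
  aemeasurable := hX.aemeasurable.comp_quasiMeasurePreserving hf.quasiMeasurePreserving
  integrable_exp := hf.integrable_comp_of_integrable hX.integrable_exp
  integral_exp_le :=
    (hf.hasLaw.integral_comp hX.integrable_exp.aestronglyMeasurable).trans_le hX.integral_exp_le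

theorem integrable (hX : IsSubExponential X K P) (hK : 0 < K) : Integrable X P := by
  refine (hX.integrable_exp.const_mul K).mono' hX.aemeasurable.aestronglyMeasurable
    (.of_forall fun ω ↦ ?_)
  have h : |X ω| / K ≤ Real.exp (|X ω| / K) := (lt_add_one _).le.trans (Real.add_one_le_exp _)
  rwa [div_le_iff₀' hK] at h

variable [IsProbabilityMeasure P]

theorem integrable_exp_mul (hX : IsSubExponential X K P) (hK : 0 < K) (ht : |t| ≤ 1 / (2 * K)) :
    Integrable (fun ω ↦ Real.exp (t * X ω)) P := by
  refine (((integrable_const 1).add ((hX.integrable hK).const_mul t)).add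
    (hX.integrable_exp.const_mul (8 * K ^ 2 * t ^ 2))).mono' ?_ (.of_forall fun ω ↦ ?_)
  · exact (Real.measurable_exp.comp_aemeasurable
      (hX.aemeasurable.const_mul t)).aestronglyMeasurable
  · rw [Real.norm_eq_abs, Real.abs_exp]
    exact exp_mul_le_one_add_add_mul_exp_abs_div hK ht _

theorem mgf_le (hX : IsSubExponential X K P) (hK : 0 < K) (ht : |t| ≤ 1 / (2 * K)) :
    mgf X P t ≤ Real.exp (t * P[X] + 16 * K ^ 2 * t ^ 2) := by
  have hlin : Integrable (fun ω ↦ 1 + t * X ω) P :=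
    (integrable_const 1).add ((hX.integrable hK).const_mul t)
  have hquad := hX.integrable_exp.const_mul (8 * K ^ 2 * t ^ 2)
  calc mgf X P t
      ≤ ∫ ω, (1 + t * X ω + 8 * K ^ 2 * t ^ 2 * Real.exp (|X ω| / K)) ∂P :=
        integral_mono (hX.integrable_exp_mul hK ht) (hlin.add hquad)
          fun ω ↦ exp_mul_le_one_add_add_mul_exp_abs_div hK ht (X ω)
    _ = 1 + t * P[X] + 8 * K ^ 2 * t ^ 2 * ∫ ω, Real.exp (|X ω| / K) ∂P := by
        rw [integral_add hlin hquad, integral_add (integrable_const 1)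
          ((hX.integrable hK).const_mul t), integral_const_mul, integral_const_mul]
        simp
    _ ≤ 1 + t * P[X] + 8 * K ^ 2 * t ^ 2 * 2 := by
        gcongr
        exact hX.integral_exp_le
    _ ≤ Real.exp (t * P[X] + 16 * K ^ 2 * t ^ 2) := by
        linarith [Real.add_one_le_exp (t * P[X] + 16 * K ^ 2 * t ^ 2)]

end IsSubExponential

section Bernstein

variable {Ω ι : Type*} [MeasurableSpace Ω] {P : Measure Ω} {X : ι → Ω → ℝ} {K t ε : ℝ}

theorem mgf_sum_le_of_isSubExponential (hind : iIndepFun X P)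
    (hX : ∀ i, IsSubExponential (X i) K P) (hK : 0 < K) (ht : |t| ≤ 1 / (2 * K))
    (s : Finset ι) :
    mgf (∑ i ∈ s, X i) P t ≤
      Real.exp (t * ∑ i ∈ s, P[X i] + s.card * (16 * K ^ 2 * t ^ 2)) := by
  have := hind.isProbabilityMeasure
  calc mgf (∑ i ∈ s, X i) P t = ∏ i ∈ s, mgf (X i) P t :=
        hind.mgf_sum₀ (fun i ↦ (hX i).aemeasurable) s
    _ ≤ ∏ i ∈ s, Real.exp (t * P[X i] + 16 * K ^ 2 * t ^ 2) :=
        Finset.prod_le_prod (fun _ _ ↦ mgf_nonneg) fun i _ ↦ (hX i).mgf_le hK ht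
    _ = Real.exp (t * ∑ i ∈ s, P[X i] + s.card * (16 * K ^ 2 * t ^ 2)) := by
        rw [← Real.exp_sum, Finset.sum_add_distrib, Finset.mul_sum, Finset.sum_const,
          nsmul_eq_mul]

theorem integrable_exp_mul_sum_of_isSubExponential (hind : iIndepFun X P)
    (hX : ∀ i, IsSubExponential (X i) K P) (hK : 0 < K) (ht : |t| ≤ 1 / (2 * K))
    (s : Finset ι) :
    Integrable (fun ω ↦ Real.exp (t * (∑ i ∈ s, X i) ω)) P := by
  have := hind.isProbabilityMeasure
  by_contra h
  have hprod : ∏ i ∈ s, mgf (X i) P t = 0 := by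
    rw [← hind.mgf_sum₀ fun i ↦ (hX i).aemeasurable, mgf_undef h]
  exact (Finset.prod_pos fun i _ ↦ mgf_pos ((hX i).integrable_exp_mul hK ht)).ne' hprod

theorem measureReal_sum_ge_le_of_isSubExponential (hind : iIndepFun X P)
    (hX : ∀ i, IsSubExponential (X i) K P) (hK : 0 < K) (hε₀ : 0 ≤ ε) (hε₁ : ε ≤ 1)
    (s : Finset ι) :
    P.real {ω | ∑ i ∈ s, P[X i] + s.card * (10 * K * ε) ≤ (∑ i ∈ s, X i) ω} ≤
      Real.exp (-(s.card * ε ^ 2)) := by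
  have := hind.isProbabilityMeasure
  have ht : |ε / (2 * K)| ≤ 1 / (2 * K) := by
    rw [abs_of_nonneg (by positivity)]
    gcongr
  refine (measure_ge_le_exp_mul_mgf _ (by positivity)
    (integrable_exp_mul_sum_of_isSubExponential hind hX hK ht s)).trans ?_
  grw [mgf_sum_le_of_isSubExponential hind hX hK ht s]
  rw [← Real.exp_add]
  refine Real.exp_le_exp.2 (le_of_eq ?_)
  field_simp
  ring

theorem measureReal_abs_sum_sub_ge_le_of_isSubExponential (hind : iIndepFun X P)
    (hX : ∀ i, IsSubExponential (X i) K P) (hK : 0 < K) (hε₀ : 0 ≤ ε) (hε₁ : ε ≤ 1)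
    (s : Finset ι) :
    P.real {ω | s.card * (10 * K * ε) ≤ |∑ i ∈ s, X i ω - ∑ i ∈ s, P[X i]|} ≤
      2 * Real.exp (-(s.card * ε ^ 2)) := by
  have := hind.isProbabilityMeasure
  have upper := measureReal_sum_ge_le_of_isSubExponential hind hX hK hε₀ hε₁ s
  have hind_neg : iIndepFun (fun i ↦ -X i) P :=
    hind.comp (fun _ ↦ Neg.neg) fun _ ↦ measurable_neg
  have lower := measureReal_sum_ge_le_of_isSubExponential hind_neg (fun i ↦ (hX i).neg) hK
    hε₀ hε₁ s
  rw [two_mul]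
  refine (measureReal_mono fun ω hω ↦ ?_).trans
    ((measureReal_union_le _ _).trans (add_le_add upper lower))
  simp only [Set.mem_union, Set.mem_ofPred_eq, Finset.sum_apply, Pi.neg_apply, integral_neg,
    Finset.sum_neg_distrib] at hω ⊢
  rcases le_abs.1 hω with h | h
  · exact .inl (by linarith)
  · exact .inr (by linarith)

end Bernstein

section Gaussian

variable {Ω : Type*} [MeasurableSpace Ω] {P : Measure Ω} {U V : Ω → ℝ}

theorem gaussianPDFReal_mul_exp_mul_sq (t z : ℝ) :
    gaussianPDFReal 0 1 z * Real.exp (t * z ^ 2) =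
      (√(2 * Real.pi))⁻¹ * Real.exp (-(1 / 2 - t) * z ^ 2) := by
  rw [gaussianPDFReal, mul_assoc, ← Real.exp_add]
  simp only [NNReal.coe_one, mul_one, sub_zero]
  ring_nf

theorem integrable_exp_mul_sq_gaussianReal {t : ℝ} (ht : t < 1 / 2) :
    Integrable (fun z ↦ Real.exp (t * z ^ 2)) (gaussianReal 0 1) := by
  rw [gaussianReal_of_var_ne_zero _ one_ne_zero,
    integrable_withDensity_iff_integrable_smul' (measurable_gaussianPDF _ _)
      (.of_forall fun _ ↦ gaussianPDF_lt_top)]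
  simp only [toReal_gaussianPDF, smul_eq_mul, gaussianPDFReal_mul_exp_mul_sq]
  exact (integrable_exp_neg_mul_sq (sub_pos.2 ht)).const_mul _

theorem integral_exp_mul_sq_gaussianReal {t : ℝ} (ht : t < 1 / 2) :
    ∫ z, Real.exp (t * z ^ 2) ∂(gaussianReal 0 1) = (√(1 - 2 * t))⁻¹ := by
  have : 0 < 1 / 2 - t := sub_pos.2 ht
  rw [integral_gaussianReal_eq_integral_smul one_ne_zero]
  simp only [smul_eq_mul, gaussianPDFReal_mul_exp_mul_sq]
  rw [integral_const_mul, integral_gaussian, inv_mul_eq_div, ← Real.sqrt_div (by positivity),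
    ← Real.sqrt_inv]
  congr 1
  have : 1 - 2 * t ≠ 0 := by linarith
  field_simp

theorem hasLaw_gaussianReal_map_sqrt_variance_mul (hU : HasGaussianLaw U P) (hU₀ : P[U] = 0) :
    HasLaw U ((gaussianReal 0 1).map (√Var[U; P] * ·)) P where
  aemeasurable := hU.aemeasurable
  map_eq := by
    rw [hU.map_eq_gaussianReal, hU₀, gaussianReal_map_const_mul, mul_zero, mul_one]
    congr 1
    ext
    simp [Real.sq_sqrt, variance_nonneg]

theorem integral_comp_eq_integral_gaussianReal (hU : HasGaussianLaw U P) (hU₀ : P[U] = 0)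
    {f : ℝ → ℝ} (hf : Measurable f) :
    ∫ ω, f (U ω) ∂P = ∫ z, f (√Var[U; P] * z) ∂(gaussianReal 0 1) :=
  ((hasLaw_gaussianReal_map_sqrt_variance_mul hU hU₀).integral_comp
    hf.aestronglyMeasurable).trans (integral_map (by fun_prop) hf.aestronglyMeasurable)

theorem integrable_comp_iff_integrable_gaussianReal (hU : HasGaussianLaw U P) (hU₀ : P[U] = 0)
    {f : ℝ → ℝ} (hf : Measurable f) :
    Integrable (fun ω ↦ f (U ω)) P ↔
      Integrable (fun z ↦ f (√Var[U; P] * z)) (gaussianReal 0 1) := by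
  have hmap := (hasLaw_gaussianReal_map_sqrt_variance_mul hU hU₀).map_eq
  have h := integrable_map_measure hf.aestronglyMeasurable hU.aemeasurable
  rw [hmap, integrable_map_measure hf.aestronglyMeasurable (by fun_prop)] at h
  exact h.symm

theorem integrable_exp_mul_sq_of_hasGaussianLaw (hU : HasGaussianLaw U P) (hU₀ : P[U] = 0)
    {t : ℝ} (ht : t * Var[U; P] < 1 / 2) : Integrable (fun ω ↦ Real.exp (t * U ω ^ 2)) P := by
  rw [integrable_comp_iff_integrable_gaussianReal hU hU₀ (f := fun u ↦ Real.exp (t * u ^ 2))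
    (by fun_prop)]
  simpa only [mul_pow, Real.sq_sqrt (variance_nonneg U P), ← mul_assoc] using
    integrable_exp_mul_sq_gaussianReal ht

theorem integral_exp_mul_sq_of_hasGaussianLaw (hU : HasGaussianLaw U P) (hU₀ : P[U] = 0)
    {t : ℝ} (ht : t * Var[U; P] < 1 / 2) :
    ∫ ω, Real.exp (t * U ω ^ 2) ∂P = (√(1 - 2 * (t * Var[U; P])))⁻¹ := by
  rw [integral_comp_eq_integral_gaussianReal hU hU₀ (f := fun u ↦ Real.exp (t * u ^ 2))
    (by fun_prop), ← integral_exp_mul_sq_gaussianReal ht]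
  simp only [mul_pow, Real.sq_sqrt (variance_nonneg U P), ← mul_assoc]

theorem integral_exp_mul_sq_le_of_variance_le_two (hU : HasGaussianLaw U P) (hU₀ : P[U] = 0)
    (hU₂ : Var[U; P] ≤ 2) : ∫ ω, Real.exp (1 / 8 * U ω ^ 2) ∂P ≤ 3 / 2 := by
  rw [integral_exp_mul_sq_of_hasGaussianLaw hU hU₀ (by linarith)]
  refine inv_le_of_inv_le₀ (by norm_num) (Real.le_sqrt_of_sq_le ?_)
  linarith

theorem exp_add_div_two_le (a b : ℝ) :
    Real.exp ((a + b) / 2) ≤ (Real.exp a + Real.exp b) / 2 := by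
  have h := convexOn_exp.2 (Set.mem_univ a) (Set.mem_univ b) one_half_pos.le one_half_pos.le
    (add_halves 1)
  rw [smul_eq_mul, smul_eq_mul, smul_eq_mul, smul_eq_mul, ← mul_add, ← mul_add] at h
  rwa [div_eq_inv_mul, div_eq_inv_mul, ← one_div]

theorem isSubExponential_of_abs_le_add_sq {T : Ω → ℝ} {A : ℝ} (hA : 0 < A)
    (hT : AEMeasurable T P) (hU : HasGaussianLaw U P) (hU₀ : P[U] = 0) (hU₂ : Var[U; P] ≤ 2)
    (hV : HasGaussianLaw V P) (hV₀ : P[V] = 0) (hV₂ : Var[V; P] ≤ 2)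
    (hle : ∀ ω, |T ω| ≤ A * (2 + U ω ^ 2 + V ω ^ 2)) : IsSubExponential T (16 * A) P := by
  have hexp (ω : Ω) : Real.exp (|T ω| / (16 * A)) ≤
      Real.exp (1 / 8) *
        ((Real.exp (1 / 8 * U ω ^ 2) + Real.exp (1 / 8 * V ω ^ 2)) / 2) := by
    grw [← exp_add_div_two_le, ← Real.exp_add]
    refine Real.exp_le_exp.2 ((div_le_iff₀ (by positivity)).2 ?_)
    linarith [hle ω]
  have hUint : Integrable (fun ω ↦ Real.exp (1 / 8 * U ω ^ 2)) P :=
    integrable_exp_mul_sq_of_hasGaussianLaw hU hU₀ (by linarith)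
  have hVint : Integrable (fun ω ↦ Real.exp (1 / 8 * V ω ^ 2)) P :=
    integrable_exp_mul_sq_of_hasGaussianLaw hV hV₀ (by linarith)
  have hbound := ((hUint.add hVint).div_const 2).const_mul (Real.exp (1 / 8))
  have hint : Integrable (fun ω ↦ Real.exp (|T ω| / (16 * A))) P :=
    hbound.mono' (by fun_prop) (.of_forall fun ω ↦ by
      rw [Real.norm_eq_abs, Real.abs_exp]
      exact hexp ω)
  have hexp_eighth : Real.exp (1 / 8) ≤ 4 / 3 := by
    have := Real.exp_bound_div_one_sub_of_interval (x := 1 / 8) (by norm_num) (by norm_num)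
    linarith
  refine ⟨hT, hint, ?_⟩
  calc ∫ ω, Real.exp (|T ω| / (16 * A)) ∂P
      ≤ ∫ ω, Real.exp (1 / 8) *
          ((Real.exp (1 / 8 * U ω ^ 2) + Real.exp (1 / 8 * V ω ^ 2)) / 2) ∂P :=
        integral_mono hint hbound hexp
    _ = Real.exp (1 / 8) *
          ((∫ ω, Real.exp (1 / 8 * U ω ^ 2) ∂P + ∫ ω, Real.exp (1 / 8 * V ω ^ 2) ∂P) / 2) := by
        rw [integral_const_mul, integral_div, integral_add hUint hVint]
    _ ≤ 4 / 3 * ((3 / 2 + 3 / 2) / 2) := by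
        gcongr
        · exact integral_exp_mul_sq_le_of_variance_le_two hU hU₀ hU₂
        · exact integral_exp_mul_sq_le_of_variance_le_two hV hV₀ hV₂
    _ = 2 := by norm_num

variable {ι : Type*} [Fintype ι] (x y : ι → ℝ)

theorem hasLaw_toLp_pi_gaussianReal :
    HasLaw (WithLp.toLp 2) (ProbabilityTheory.stdGaussian (EuclideanSpace ℝ ι))
      (Measure.pi fun _ : ι ↦ gaussianReal 0 1) where
  map_eq := map_pi_eq_stdGaussian

theorem hasGaussianLaw_dotProduct_prodMk :
    HasGaussianLaw (fun w : ι → ℝ ↦ (w ⬝ᵥ x, w ⬝ᵥ y)) (Measure.pi fun _ ↦ gaussianReal 0 1) := by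
  exact hasLaw_toLp_pi_gaussianReal.hasGaussianLaw.map_fun
    ((innerSL ℝ (WithLp.toLp 2 x)).prod (innerSL ℝ (WithLp.toLp 2 y)))

theorem integral_dotProduct_pi_gaussianReal :
    ∫ w, w ⬝ᵥ x ∂(Measure.pi fun _ ↦ gaussianReal 0 1) = 0 := by
  exact (hasLaw_toLp_pi_gaussianReal.integral_comp (by fun_prop)).trans
    (integral_strongDual_stdGaussian (innerSL ℝ (WithLp.toLp 2 x)))

theorem covariance_dotProduct_pi_gaussianReal :
    cov[fun w ↦ w ⬝ᵥ x, fun w ↦ w ⬝ᵥ y; Measure.pi fun _ ↦ gaussianReal 0 1] = x ⬝ᵥ y := by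
  have h := covarianceBilin_apply_eq_cov IsGaussian.memLp_two_id
    (μ := ProbabilityTheory.stdGaussian (EuclideanSpace ℝ ι)) (WithLp.toLp 2 x) (WithLp.toLp 2 y)
  rw [covarianceBilin_stdGaussian, ← hasLaw_toLp_pi_gaussianReal.covariance_fun_comp
    (by fun_prop) (by fun_prop)] at h
  calc cov[fun w ↦ w ⬝ᵥ x, fun w ↦ w ⬝ᵥ y; Measure.pi fun _ ↦ gaussianReal 0 1]
      = inner ℝ (WithLp.toLp 2 x) (WithLp.toLp 2 y) := h.symm
    _ = x ⬝ᵥ y := by simp [EuclideanSpace.inner_eq_star_dotProduct, dotProduct_comm]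

theorem variance_dotProduct_pi_gaussianReal :
    Var[fun w ↦ w ⬝ᵥ x; Measure.pi fun _ ↦ gaussianReal 0 1] = x ⬝ᵥ x := by
  rw [← covariance_dotProduct_pi_gaussianReal x x, covariance_self (by fun_prop)]

end Gaussian

section Regression

variable {Ω : Type*} [MeasurableSpace Ω] {P : Measure Ω} {U V : Ω → ℝ}

/-- The residual of the linear regression of `V` on `U`. When `U` has variance zero the
coefficient is `0` and the residual is `V` itself. -/
noncomputable def regressionResidual (U V : Ω → ℝ) (P : Measure Ω) (ω : Ω) : ℝ :=
  V ω - cov[U, V; P] / Var[U; P] * U ω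

theorem integral_regressionResidual (hU : Integrable U P) (hV : Integrable V P)
    (hU₀ : P[U] = 0) (hV₀ : P[V] = 0) : P[regressionResidual U V P] = 0 := by
  simp only [regressionResidual]
  rw [integral_sub hV (hU.const_mul _), integral_const_mul, hU₀, hV₀, mul_zero, sub_zero]

theorem covariance_regressionResidual [IsFiniteMeasure P] (hU : MemLp U 2 P) (hV : MemLp V 2 P)
    (hvar : Var[U; P] ≠ 0) : cov[U, regressionResidual U V P; P] = 0 := by
  unfold regressionResidual
  rw [covariance_fun_sub_right hU hV (hU.const_mul _), covariance_const_mul_right,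
    covariance_self hU.aemeasurable, div_mul_cancel₀ _ hvar, sub_self]

theorem variance_regressionResidual_le [IsFiniteMeasure P] (hU : MemLp U 2 P)
    (hV : MemLp V 2 P) : Var[regressionResidual U V P; P] ≤ Var[V; P] := by
  have hvar : Var[regressionResidual U V P; P] = Var[V; P] - cov[U, V; P] ^ 2 / Var[U; P] := by
    unfold regressionResidual
    rw [variance_fun_sub hV (hU.const_mul _), covariance_const_mul_right, covariance_comm V U,
      variance_const_mul]
    rcases eq_or_ne Var[U; P] 0 with h | h
    · simp [h]
    · field_simp
      ring
  rw [hvar]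
  exact sub_le_self _ (div_nonneg (sq_nonneg _) (variance_nonneg U P))

theorem hasGaussianLaw_prodMk_regressionResidual
    (hUV : HasGaussianLaw (fun ω ↦ (U ω, V ω)) P) :
    HasGaussianLaw (fun ω ↦ (U ω, regressionResidual U V P ω)) P :=
  hUV.map_fun ((ContinuousLinearMap.fst ℝ ℝ ℝ).prod (ContinuousLinearMap.snd ℝ ℝ ℝ -
    (cov[U, V; P] / Var[U; P]) • ContinuousLinearMap.fst ℝ ℝ ℝ))

theorem indepFun_regressionResidual (hUV : HasGaussianLaw (fun ω ↦ (U ω, V ω)) P)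
    (hvar : Var[U; P] ≠ 0) : IndepFun U (regressionResidual U V P) P := by
  have := hUV.isProbabilityMeasure
  exact (hasGaussianLaw_prodMk_regressionResidual hUV).indepFun_of_covariance_eq_zero
    (covariance_regressionResidual hUV.fst.memLp_two hUV.snd.memLp_two hvar)

end Regression

theorem abs_integral_le_add_mul_variance {Ω : Type*} [MeasurableSpace Ω] {P : Measure Ω}
    [IsProbabilityMeasure P] {U f : Ω → ℝ} (hU : MemLp U 2 P) (hU₀ : P[U] = 0) {A B : ℝ}
    (hf : ∀ ω, |f ω| ≤ A + B * U ω ^ 2) : |∫ ω, f ω ∂P| ≤ A + B * Var[U; P] := by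
  have hsq : Integrable (fun ω ↦ B * U ω ^ 2) P := hU.integrable_sq.const_mul B
  calc |∫ ω, f ω ∂P| ≤ ∫ ω, (A + B * U ω ^ 2) ∂P := by
        exact norm_integral_le_of_norm_le (f := f) ((integrable_const A).add hsq) (.of_forall hf)
    _ = A + B * Var[U; P] := by
        rw [integral_add (integrable_const A) hsq, integral_const_mul,
          variance_of_integral_eq_zero hU.aemeasurable hU₀]
        simp

theorem abs_integral_gaussianReal_le_add {f : ℝ → ℝ} {A B : ℝ}
    (hf : ∀ z, |f z| ≤ A + B * z ^ 2) : |∫ z, f z ∂(gaussianReal 0 1)| ≤ A + B := by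
  simpa using abs_integral_le_add_mul_variance (P := gaussianReal 0 1) (U := id)
    (memLp_id_gaussianReal 2) integral_id_gaussianReal hf

theorem abs_sqrt_sub_one_le {a : ℝ} (ha : 0 ≤ a) : |√a - 1| ≤ |a - 1| := by
  have hfactor : a - 1 = (√a - 1) * (√a + 1) := by
    linarith [Real.mul_self_sqrt ha]
  rw [hfactor, abs_mul]
  refine le_mul_of_one_le_right (abs_nonneg _) ?_
  rw [abs_of_nonneg (by positivity)]
  linarith [Real.sqrt_nonneg a]

theorem abs_integral_mul_le_add_integral_sq {Ω : Type*} [MeasurableSpace Ω] {P : Measure Ω}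
    {f g : Ω → ℝ} (hf : MemLp f 2 P) (hg : MemLp g 2 P) :
    |∫ ω, f ω * g ω ∂P| ≤ (∫ ω, f ω ^ 2 ∂P + ∫ ω, g ω ^ 2 ∂P) / 2 := by
  rw [← integral_add hf.integrable_sq hg.integrable_sq, ← integral_div]
  refine norm_integral_le_of_norm_le (f := fun ω ↦ f ω * g ω)
    ((hf.integrable_sq.add hg.integrable_sq).div_const 2) (.of_forall fun ω ↦ ?_)
  rw [Real.norm_eq_abs, abs_mul]
  linarith [two_mul_le_add_sq |f ω| |g ω|, sq_abs (f ω), sq_abs (g ω)]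

theorem memLp_comp_of_lipschitzWith {Ω E F : Type*} [MeasurableSpace Ω] {P : Measure Ω}
    [IsFiniteMeasure P] [NormedAddCommGroup E] [NormedAddCommGroup F] {f : E → F} {K : NNReal}
    (hf : LipschitzWith K f) {p : ENNReal} {U : Ω → E} (hU : MemLp U p P) :
    MemLp (fun ω ↦ f (U ω)) p P := by
  have hshift : LipschitzWith K fun x ↦ f x - f 0 :=
    .of_dist_le_mul fun x y ↦ by simpa using hf.dist_le_mul x y
  have h := (hshift.comp_memLp (sub_self _) hU).add (memLp_const (f 0))
  simpa [Pi.add_def, Function.comp_def] using h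

/-- A Lipschitz activation function `σ` with `E σ(g) = 0` and `E σ(g)² = 1` for a standard
Gaussian `g`. The Lipschitz constant `K` plays the role of `λ_σ`. -/
structure IsNormalizedActivation (σ : ℝ → ℝ) (K : NNReal) : Prop where
  lipschitzWith : LipschitzWith K σ
  integral_eq_zero : ∫ z, σ z ∂(gaussianReal 0 1) = 0
  integral_sq_eq_one : ∫ z, σ z ^ 2 ∂(gaussianReal 0 1) = 1

namespace IsNormalizedActivation

variable {σ : ℝ → ℝ} {K : NNReal} {Ω : Type*} [MeasurableSpace Ω] {P : Measure Ω} {U V : Ω → ℝ}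

theorem measurable (hσ : IsNormalizedActivation σ K) : Measurable σ :=
  hσ.lipschitzWith.continuous.measurable

theorem of_hasDerivAt {σ' : ℝ → ℝ} (hσ' : ∀ x, HasDerivAt σ (σ' x) x) (hK : ∀ x, |σ' x| ≤ K)
    (hmean : ∫ z, σ z ∂(gaussianReal 0 1) = 0) (hsq : ∫ z, σ z ^ 2 ∂(gaussianReal 0 1) = 1) :
    IsNormalizedActivation σ K where
  lipschitzWith := lipschitzWith_of_nnnorm_deriv_le (fun x ↦ (hσ' x).differentiableAt) fun x ↦ by
    rw [(hσ' x).deriv]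
    exact_mod_cast hK x
  integral_eq_zero := hmean
  integral_sq_eq_one := hsq

theorem abs_sub_le (hσ : IsNormalizedActivation σ K) (x y : ℝ) :
    |σ x - σ y| ≤ K * |x - y| := by
  simpa only [Real.dist_eq] using hσ.lipschitzWith.dist_le_mul x y

theorem memLp_two (hσ : IsNormalizedActivation σ K) : MemLp σ 2 (gaussianReal 0 1) :=
  memLp_comp_of_lipschitzWith hσ.lipschitzWith (memLp_id_gaussianReal 2)

theorem one_add_sq_le (hσ : IsNormalizedActivation σ K) : 1 + σ 0 ^ 2 ≤ (K : ℝ) ^ 2 := by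
  have hexpand : ∫ z, (σ z - σ 0) ^ 2 ∂(gaussianReal 0 1) = 1 + σ 0 ^ 2 := by
    have hsq := hσ.memLp_two.integrable_sq
    have hlin : Integrable (fun z ↦ 2 * σ z * σ 0) (gaussianReal 0 1) :=
      ((hσ.memLp_two.integrable one_le_two).const_mul 2).mul_const _
    simp only [sub_sq]
    rw [integral_add (by exact hsq.sub hlin) (integrable_const _), integral_sub hsq hlin,
      integral_mul_const, integral_const_mul, hσ.integral_eq_zero, hσ.integral_sq_eq_one]
    simp
  have hle (z : ℝ) : |(σ z - σ 0) ^ 2| ≤ 0 + K ^ 2 * z ^ 2 := by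
    rw [abs_pow, zero_add, ← sq_abs z, ← mul_pow]
    gcongr
    simpa using hσ.abs_sub_le z 0
  rw [← hexpand, ← zero_add ((K : ℝ) ^ 2)]
  exact (le_abs_self _).trans (abs_integral_gaussianReal_le_add hle)

theorem one_le (hσ : IsNormalizedActivation σ K) : 1 ≤ (K : ℝ) :=
  (one_le_sq_iff₀ K.coe_nonneg).1 (by linarith [hσ.one_add_sq_le, sq_nonneg (σ 0)])

theorem abs_apply_le (hσ : IsNormalizedActivation σ K) (x : ℝ) : |σ x| ≤ K * (1 + |x|) := by
  have hzero : |σ 0| ≤ K := abs_le_of_sq_le_sq (by linarith [hσ.one_add_sq_le]) K.2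
  have hsub := hσ.abs_sub_le x 0
  rw [sub_zero] at hsub
  linarith [abs_sub_abs_le_abs_sub (σ x) (σ 0)]

theorem abs_apply_mul_apply_le (hσ : IsNormalizedActivation σ K) (u v : ℝ) :
    |σ u * σ v| ≤ K ^ 2 * (2 + u ^ 2 + v ^ 2) := by
  calc |σ u * σ v| ≤ K * (1 + |u|) * (K * (1 + |v|)) := by
        rw [abs_mul]
        gcongr <;> exact hσ.abs_apply_le _
    _ = K ^ 2 * ((1 + |u|) * (1 + |v|)) := by ring
    _ ≤ K ^ 2 * (2 + u ^ 2 + v ^ 2) := by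
        gcongr
        nlinarith [sq_nonneg (|u| - |v|), sq_nonneg (1 - |u|), sq_nonneg (1 - |v|), sq_abs u,
          sq_abs v]

theorem isSubExponential_comp_mul_comp (hσ : IsNormalizedActivation σ K)
    (hU : HasGaussianLaw U P) (hU₀ : P[U] = 0) (hU₂ : Var[U; P] ≤ 2)
    (hV : HasGaussianLaw V P) (hV₀ : P[V] = 0) (hV₂ : Var[V; P] ≤ 2) :
    IsSubExponential (fun ω ↦ σ (U ω) * σ (V ω)) (16 * K ^ 2) P :=
  isSubExponential_of_abs_le_add_sq (pow_pos (one_pos.trans_le hσ.one_le) 2)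
    ((hσ.measurable.comp_aemeasurable hU.aemeasurable).mul
      (hσ.measurable.comp_aemeasurable hV.aemeasurable))
    hU hU₀ hU₂ hV hV₀ hV₂ fun _ ↦ hσ.abs_apply_mul_apply_le _ _

theorem abs_apply_sqrt_mul_sub_le (hσ : IsNormalizedActivation σ K) {v : ℝ} (hv : 0 ≤ v)
    (z : ℝ) : |σ (√v * z) - σ z| ≤ K * |v - 1| * |z| := by
  calc |σ (√v * z) - σ z| ≤ K * |√v * z - z| := hσ.abs_sub_le _ _
    _ = K * |√v - 1| * |z| := by rw [← sub_one_mul, abs_mul, mul_assoc]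
    _ ≤ K * |v - 1| * |z| := by
        gcongr K * ?_ * |z|
        exact abs_sqrt_sub_one_le hv

theorem memLp_two_comp_const_mul (hσ : IsNormalizedActivation σ K) (a : ℝ) :
    MemLp (fun z ↦ σ (a * z)) 2 (gaussianReal 0 1) :=
  memLp_comp_of_lipschitzWith hσ.lipschitzWith ((memLp_id_gaussianReal 2).const_mul a)

theorem abs_integral_comp_le (hσ : IsNormalizedActivation σ K) (hU : HasGaussianLaw U P)
    (hU₀ : P[U] = 0) : |∫ ω, σ (U ω) ∂P| ≤ K * |Var[U; P] - 1| := by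
  set v := Var[U; P]
  have hle (z : ℝ) :
      |σ (√v * z) - σ z| ≤ K * |v - 1| / 2 + K * |v - 1| / 2 * z ^ 2 := by
    have hz : |z| ≤ (1 + z ^ 2) / 2 := by
      nlinarith [sq_nonneg (1 - |z|), sq_abs z]
    calc |σ (√v * z) - σ z| ≤ K * |v - 1| * |z| :=
          hσ.abs_apply_sqrt_mul_sub_le (variance_nonneg U P) z
      _ ≤ K * |v - 1| * ((1 + z ^ 2) / 2) := by gcongr
      _ = K * |v - 1| / 2 + K * |v - 1| / 2 * z ^ 2 := by ring
  have h := abs_integral_gaussianReal_le_add hle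
  rw [integral_sub ((hσ.memLp_two_comp_const_mul _).integrable one_le_two)
    (hσ.memLp_two.integrable one_le_two), hσ.integral_eq_zero, sub_zero, add_halves] at h
  rwa [integral_comp_eq_integral_gaussianReal hU hU₀ hσ.measurable]

theorem abs_integral_sq_comp_sub_one_le (hσ : IsNormalizedActivation σ K)
    (hU : HasGaussianLaw U P) (hU₀ : P[U] = 0) (hvar : Var[U; P] ≤ 4) :
    |∫ ω, σ (U ω) ^ 2 ∂P - 1| ≤ 5 * K ^ 2 * |Var[U; P] - 1| := by
  set v := Var[U; P]
  have hsqrt : √v ≤ 2 := Real.sqrt_le_iff.2 ⟨by norm_num, by linarith⟩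
  have hle (z : ℝ) : |σ (√v * z) ^ 2 - σ z ^ 2| ≤
      K ^ 2 * |v - 1| + 4 * K ^ 2 * |v - 1| * z ^ 2 := by
    have hsum : |σ (√v * z) + σ z| ≤ K * (2 + 3 * |z|) := by
      have hmul : |√v * z| ≤ 2 * |z| := by
        rw [abs_mul, abs_of_nonneg (Real.sqrt_nonneg v)]
        gcongr
      have hscaled : |σ (√v * z)| ≤ K * (1 + 2 * |z|) :=
        (hσ.abs_apply_le _).trans (by gcongr)
      linarith [abs_add_le (σ (√v * z)) (σ z), hσ.abs_apply_le z]
    calc |σ (√v * z) ^ 2 - σ z ^ 2| = |σ (√v * z) + σ z| * |σ (√v * z) - σ z| := by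
          rw [sq_sub_sq, abs_mul]
      _ ≤ K * (2 + 3 * |z|) * (K * |v - 1| * |z|) := by
          gcongr
          exact hσ.abs_apply_sqrt_mul_sub_le (variance_nonneg U P) z
      _ = K ^ 2 * |v - 1| * (2 * |z| + 3 * z ^ 2) := by rw [← sq_abs z]; ring
      _ ≤ K ^ 2 * |v - 1| * (1 + 4 * z ^ 2) := by
          gcongr K ^ 2 * |v - 1| * ?_
          nlinarith [sq_nonneg (1 - |z|), sq_abs z]
      _ = K ^ 2 * |v - 1| + 4 * K ^ 2 * |v - 1| * z ^ 2 := by ring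
  have h := abs_integral_gaussianReal_le_add hle
  rw [integral_sub (hσ.memLp_two_comp_const_mul _).integrable_sq hσ.memLp_two.integrable_sq,
    hσ.integral_sq_eq_one] at h
  rw [integral_comp_eq_integral_gaussianReal hU hU₀ (f := fun u ↦ σ u ^ 2)
    (hσ.measurable.pow_const 2)]
  linarith

theorem abs_integral_comp_le_of_memLp (hσ : IsNormalizedActivation σ K)
    [IsProbabilityMeasure P] (hU : MemLp U 2 P) (hU₀ : P[U] = 0) :
    |∫ ω, σ (U ω) ∂P| ≤ K * (3 / 2 + Var[U; P] / 2) := by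
  have hle (ω : Ω) : |σ (U ω)| ≤ K * (3 / 2) + K / 2 * U ω ^ 2 := by
    have habs : |U ω| ≤ 1 / 2 + U ω ^ 2 / 2 := by
      nlinarith [sq_nonneg (1 - |U ω|), sq_abs (U ω)]
    calc |σ (U ω)| ≤ K * (1 + |U ω|) := hσ.abs_apply_le _
      _ ≤ K * (1 + (1 / 2 + U ω ^ 2 / 2)) := by gcongr
      _ = K * (3 / 2) + K / 2 * U ω ^ 2 := by ring
  linarith [abs_integral_le_add_mul_variance hU hU₀ hle]

theorem abs_integral_comp_mul_sub_comp_le (hσ : IsNormalizedActivation σ K)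
    [IsProbabilityMeasure P] (hU : MemLp U 2 P) (hU₀ : P[U] = 0) (t : ℝ) :
    |∫ ω, σ (U ω) * (σ (V ω) - σ (V ω - t * U ω)) ∂P| ≤
      K ^ 2 * |t| * (1 / 2 + 3 / 2 * Var[U; P]) := by
  have hle (ω : Ω) : |σ (U ω) * (σ (V ω) - σ (V ω - t * U ω))| ≤
      K ^ 2 * |t| / 2 + K ^ 2 * |t| * (3 / 2) * U ω ^ 2 := by
    have hsub : |σ (V ω) - σ (V ω - t * U ω)| ≤ K * (|t| * |U ω|) := by
      simpa [abs_mul] using hσ.abs_sub_le (V ω) (V ω - t * U ω)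
    calc |σ (U ω) * (σ (V ω) - σ (V ω - t * U ω))|
        ≤ K * (1 + |U ω|) * (K * (|t| * |U ω|)) := by
          rw [abs_mul]
          gcongr
          exact hσ.abs_apply_le _
      _ = K ^ 2 * |t| * (|U ω| + U ω ^ 2) := by rw [← sq_abs (U ω)]; ring
      _ ≤ K ^ 2 * |t| * (1 / 2 + 3 / 2 * U ω ^ 2) := by
          gcongr K ^ 2 * |t| * ?_
          nlinarith [sq_nonneg (1 - |U ω|), sq_abs (U ω)]
      _ = K ^ 2 * |t| / 2 + K ^ 2 * |t| * (3 / 2) * U ω ^ 2 := by ring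
  linarith [abs_integral_le_add_mul_variance hU hU₀ hle]

theorem integral_comp_mul_comp_eq (hσ : IsNormalizedActivation σ K)
    (hUV : HasGaussianLaw (fun ω ↦ (U ω, V ω)) P) (hvar : Var[U; P] ≠ 0) :
    ∫ ω, σ (U ω) * σ (V ω) ∂P =
      (∫ ω, σ (U ω) ∂P) * (∫ ω, σ (regressionResidual U V P ω) ∂P) +
        ∫ ω, σ (U ω) * (σ (V ω) - σ (regressionResidual U V P ω)) ∂P := by
  have := hUV.isProbabilityMeasure
  have hσU := memLp_comp_of_lipschitzWith hσ.lipschitzWith hUV.fst.memLp_two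
  have hσV := memLp_comp_of_lipschitzWith hσ.lipschitzWith hUV.snd.memLp_two
  have hσR := memLp_comp_of_lipschitzWith hσ.lipschitzWith
    (hasGaussianLaw_prodMk_regressionResidual hUV).snd.memLp_two
  have hindep : IndepFun (fun ω ↦ σ (U ω)) (fun ω ↦ σ (regressionResidual U V P ω)) P :=
    (indepFun_regressionResidual hUV hvar).comp hσ.measurable hσ.measurable
  simp only [mul_sub]
  rw [← hindep.integral_fun_mul_eq_mul_integral hσU.aestronglyMeasurable
      hσR.aestronglyMeasurable, integral_sub (by exact hσU.integrable_mul hσV)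
      (by exact hσU.integrable_mul hσR), add_sub_cancel]

theorem abs_integral_comp_mul_comp_le_of_variance_ne_zero (hσ : IsNormalizedActivation σ K)
    (hUV : HasGaussianLaw (fun ω ↦ (U ω, V ω)) P) (hU₀ : P[U] = 0) (hV₀ : P[V] = 0)
    (hvar : Var[U; P] ≠ 0) :
    |∫ ω, σ (U ω) * σ (V ω) ∂P| ≤
      K ^ 2 * (|Var[U; P] - 1| * (3 / 2 + Var[V; P] / 2) +
        |cov[U, V; P] / Var[U; P]| * (1 / 2 + 3 / 2 * Var[U; P])) := by
  have := hUV.isProbabilityMeasure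
  have hU := hUV.fst
  have hV := hUV.snd
  set R := regressionResidual U V P
  have hmeanR : |∫ ω, σ (R ω) ∂P| ≤ K * (3 / 2 + Var[V; P] / 2) := by
    grw [hσ.abs_integral_comp_le_of_memLp
        (hasGaussianLaw_prodMk_regressionResidual hUV).snd.memLp_two
        (integral_regressionResidual hU.integrable hV.integrable hU₀ hV₀),
      variance_regressionResidual_le hU.memLp_two hV.memLp_two]
  calc |∫ ω, σ (U ω) * σ (V ω) ∂P|
      ≤ |∫ ω, σ (U ω) ∂P| * |∫ ω, σ (R ω) ∂P| +
          |∫ ω, σ (U ω) * (σ (V ω) - σ (R ω)) ∂P| := by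
        rw [hσ.integral_comp_mul_comp_eq hUV hvar, ← abs_mul]
        exact abs_add_le _ _
    _ ≤ K * |Var[U; P] - 1| * (K * (3 / 2 + Var[V; P] / 2)) +
          K ^ 2 * |cov[U, V; P] / Var[U; P]| * (1 / 2 + 3 / 2 * Var[U; P]) := by
        gcongr
        · exact hσ.abs_integral_comp_le hU hU₀
        · exact hσ.abs_integral_comp_mul_sub_comp_le hU.memLp_two hU₀ _
    _ = K ^ 2 * (|Var[U; P] - 1| * (3 / 2 + Var[V; P] / 2) +
          |cov[U, V; P] / Var[U; P]| * (1 / 2 + 3 / 2 * Var[U; P])) := by ring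

theorem abs_integral_comp_mul_comp_le_of_le_half (hσ : IsNormalizedActivation σ K)
    (hUV : HasGaussianLaw (fun ω ↦ (U ω, V ω)) P) (hU₀ : P[U] = 0) (hV₀ : P[V] = 0) {ε : ℝ}
    (hε : ε ≤ 1 / 2) (hU₁ : |Var[U; P] - 1| ≤ ε) (hV₁ : |Var[V; P] - 1| ≤ ε)
    (hcov : |cov[U, V; P]| ≤ ε) : |∫ ω, σ (U ω) * σ (V ω) ∂P| ≤ 8 * K ^ 2 * ε := by
  have hε₀ : 0 ≤ ε := (abs_nonneg _).trans hcov
  have hUle : Var[U; P] ≤ 3 / 2 := by linarith [le_abs_self (Var[U; P] - 1)]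
  have hVle : Var[V; P] ≤ 3 / 2 := by linarith [le_abs_self (Var[V; P] - 1)]
  have hUge : 1 / 2 ≤ Var[U; P] := by linarith [neg_abs_le (Var[U; P] - 1)]
  have hUpos : 0 < Var[U; P] := by linarith
  have hV_nonneg : 0 ≤ Var[V; P] := variance_nonneg V P
  have hcoef : |cov[U, V; P] / Var[U; P]| ≤ 2 * ε := by
    rw [abs_div, abs_of_pos hUpos, div_le_iff₀ hUpos]
    nlinarith
  calc |∫ ω, σ (U ω) * σ (V ω) ∂P|
      ≤ K ^ 2 * (|Var[U; P] - 1| * (3 / 2 + Var[V; P] / 2) +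
          |cov[U, V; P] / Var[U; P]| * (1 / 2 + 3 / 2 * Var[U; P])) :=
        hσ.abs_integral_comp_mul_comp_le_of_variance_ne_zero hUV hU₀ hV₀ hUpos.ne'
    _ ≤ K ^ 2 * (ε * (3 / 2 + 3 / 2 / 2) + 2 * ε * (1 / 2 + 3 / 2 * (3 / 2))) := by gcongr
    _ ≤ 8 * K ^ 2 * ε := by nlinarith [mul_nonneg (sq_nonneg (K : ℝ)) hε₀]

theorem abs_integral_comp_mul_comp_le (hσ : IsNormalizedActivation σ K)
    (hUV : HasGaussianLaw (fun ω ↦ (U ω, V ω)) P) (hU₀ : P[U] = 0) (hV₀ : P[V] = 0) {ε : ℝ}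
    (hε : ε ≤ 1) (hU₁ : |Var[U; P] - 1| ≤ ε) (hV₁ : |Var[V; P] - 1| ≤ ε)
    (hcov : |cov[U, V; P]| ≤ ε) : |∫ ω, σ (U ω) * σ (V ω) ∂P| ≤ 8 * K ^ 2 * ε := by
  rcases le_total ε (1 / 2) with hsmall | hlarge
  · exact hσ.abs_integral_comp_mul_comp_le_of_le_half hUV hU₀ hV₀ hsmall hU₁ hV₁ hcov
  have hK : (1 : ℝ) ≤ K ^ 2 := one_le_pow₀ hσ.one_le
  have hsq {Y : Ω → ℝ} (hY : HasGaussianLaw Y P) (hY₀ : P[Y] = 0) (hY₁ : |Var[Y; P] - 1| ≤ ε) :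
      ∫ ω, σ (Y ω) ^ 2 ∂P ≤ 1 + 5 * K ^ 2 * ε := by
    have hY₂ : Var[Y; P] ≤ 4 := by linarith [le_abs_self (Var[Y; P] - 1)]
    grw [← hY₁]
    linarith [le_abs_self (∫ ω, σ (Y ω) ^ 2 ∂P - 1),
      hσ.abs_integral_sq_comp_sub_one_le hY hY₀ hY₂]
  have := hUV.isProbabilityMeasure
  nlinarith [hsq hUV.fst hU₀ hU₁, hsq hUV.snd hV₀ hV₁, abs_integral_mul_le_add_integral_sq
    (memLp_comp_of_lipschitzWith hσ.lipschitzWith hUV.fst.memLp_two)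
    (memLp_comp_of_lipschitzWith hσ.lipschitzWith hUV.snd.memLp_two)]

end IsNormalizedActivation

theorem measureReal_abs_average_sub_integral_ge_le {E m : Type*} [MeasurableSpace E] [Fintype m]
    {γ : Measure E} [IsProbabilityMeasure γ] {T : E → ℝ} {K ε : ℝ}
    (hT : IsSubExponential T K γ) (hK : 0 < K) (hε₀ : 0 ≤ ε) (hε₁ : ε ≤ 1) :
    (Measure.pi fun _ : m ↦ γ).real
        {W | 10 * K * ε ≤ |(Fintype.card m : ℝ)⁻¹ * ∑ k, T (W k) - ∫ w, T w ∂γ|} ≤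
      2 * Real.exp (-(Fintype.card m * ε ^ 2)) := by
  rcases isEmpty_or_nonempty m with hm | hm
  · refine measureReal_le_one.trans ?_
    simp
  have hsub (k : m) : IsSubExponential (fun W : m → E ↦ T (W k)) K (Measure.pi fun _ ↦ γ) :=
    hT.comp_measurePreserving (measurePreserving_eval _ k)
  have hmean (k : m) : ∫ W : m → E, T (W k) ∂(Measure.pi fun _ ↦ γ) = ∫ w, T w ∂γ :=
    integral_comp_eval hT.aemeasurable.aestronglyMeasurable
  have hbernstein := measureReal_abs_sum_sub_ge_le_of_isSubExponential
    (iIndepFun_pi fun _ : m ↦ hT.aemeasurable) hsub hK hε₀ hε₁ Finset.univ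
  refine (measureReal_mono fun W hW ↦ ?_).trans hbernstein
  have hcard : (0 : ℝ) < Fintype.card m := by positivity
  simp only [Set.mem_ofPred_eq, hmean, Finset.sum_const, Finset.card_univ, nsmul_eq_mul] at hW ⊢
  calc Fintype.card m * (10 * K * ε)
      ≤ Fintype.card m * |(Fintype.card m : ℝ)⁻¹ * ∑ k, T (W k) - ∫ w, T w ∂γ| := by gcongr
    _ = |∑ k, T (W k) - Fintype.card m * ∫ w, T w ∂γ| := by
        rw [← abs_of_pos hcard, ← abs_mul, abs_of_pos hcard, mul_sub,
          mul_inv_cancel_left₀ hcard.ne']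

theorem ofReal_one_sub_le_measure_of_measureReal_compl_le {Ω : Type*} [MeasurableSpace Ω]
    {P : Measure Ω} [IsProbabilityMeasure P] {s : Set Ω} {t : ℝ} (hs : P.real sᶜ ≤ t) :
    ENNReal.ofReal (1 - t) ≤ P s := by
  have hunion : 1 ≤ P.real s + P.real sᶜ := by
    rw [← probReal_univ (μ := P), ← Set.union_compl_self s]
    exact measureReal_union_le s sᶜ
  refine ENNReal.ofReal_le_of_le_toReal ?_
  rw [← measureReal_def]
  linarith

/-- The columns of `Y` are orthonormal up to an entrywise error `δ` in the Gram matrix. -/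
def HasNearlyOrthonormalColumns {ι κ : Type*} [Fintype ι] [DecidableEq κ] (δ : ℝ)
    (Y : Matrix ι κ ℝ) : Prop :=
  ∀ α β, |(Yᵀ * Y) α β - (1 : Matrix κ κ ℝ) α β| ≤ δ

theorem hasNearlyOrthonormalColumns_iff {ι κ : Type*} [Fintype ι] [DecidableEq κ] {δ : ℝ}
    {Y : Matrix ι κ ℝ} :
    HasNearlyOrthonormalColumns δ Y ↔
      (∀ α, |∑ i, Y i α ^ 2 - 1| ≤ δ) ∧ ∀ α β, α ≠ β → |∑ i, Y i α * Y i β| ≤ δ := by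
  have hdiag (α : κ) : (Yᵀ * Y) α α - (1 : Matrix κ κ ℝ) α α = ∑ i, Y i α ^ 2 - 1 := by
    simp [Matrix.mul_apply, sq]
  have hoff {α β : κ} (hne : α ≠ β) :
      (Yᵀ * Y) α β - (1 : Matrix κ κ ℝ) α β = ∑ i, Y i α * Y i β := by
    simp [Matrix.mul_apply, hne]
  refine ⟨fun h ↦ ⟨fun α ↦ hdiag α ▸ h α α, fun α β hne ↦ hoff hne ▸ h α β⟩,
    fun ⟨hnorm, hinner⟩ α β ↦ ?_⟩
  rcases eq_or_ne α β with rfl | hne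
  · exact hdiag α ▸ hnorm α
  · exact hoff hne ▸ hinner α β hne

/-- The matrix `σ(WX)/√N` of random features of the columns of `X`, where `N` is the number of
rows of `W`. -/
noncomputable def featureMatrix {ι κ m : Type*} [Fintype ι] [Fintype m] (σ : ℝ → ℝ)
    (X : Matrix ι κ ℝ) (W : m → ι → ℝ) : Matrix m κ ℝ :=
  (√(Fintype.card m))⁻¹ • (Matrix.of W * X).map σ

section RandomFeatures

variable {ι κ m : Type*} [Fintype ι] [Fintype m] {X : Matrix ι κ ℝ} {σ : ℝ → ℝ} {K : NNReal}
  {ε : ℝ}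

theorem transpose_featureMatrix_mul_self_apply (W : m → ι → ℝ) (α β : κ) :
    ((featureMatrix σ X W)ᵀ * featureMatrix σ X W) α β =
      (Fintype.card m : ℝ)⁻¹ * ∑ k, σ (W k ⬝ᵥ Xᵀ α) * σ (W k ⬝ᵥ Xᵀ β) := by
  have hentry (k : m) (α : κ) :
      featureMatrix σ X W k α = (√(Fintype.card m))⁻¹ * σ (W k ⬝ᵥ Xᵀ α) := rfl
  have hscale : (√(Fintype.card m : ℝ))⁻¹ * (√(Fintype.card m : ℝ))⁻¹ =
      (Fintype.card m : ℝ)⁻¹ := by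
    rw [← mul_inv, Real.mul_self_sqrt (Nat.cast_nonneg _)]
  simp only [Matrix.mul_apply, Matrix.transpose_apply, hentry, Finset.mul_sum]
  exact Finset.sum_congr rfl fun k _ ↦ by rw [mul_mul_mul_comm, hscale]

variable [DecidableEq κ]

theorem abs_variance_dotProduct_column_sub_one_le (hX : HasNearlyOrthonormalColumns ε X)
    (α : κ) : |Var[fun w ↦ w ⬝ᵥ Xᵀ α; Measure.pi fun _ : ι ↦ gaussianReal 0 1] - 1| ≤ ε := by
  rw [variance_dotProduct_pi_gaussianReal]
  simpa [Matrix.mul_apply, dotProduct] using hX α α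

theorem abs_integral_features_sub_one_apply_le (hσ : IsNormalizedActivation σ K)
    (hX : HasNearlyOrthonormalColumns ε X) (hε : ε ≤ 1) (α β : κ) :
    |∫ w, σ (w ⬝ᵥ Xᵀ α) * σ (w ⬝ᵥ Xᵀ β) ∂(Measure.pi fun _ : ι ↦ gaussianReal 0 1) -
        (1 : Matrix κ κ ℝ) α β| ≤ 8 * K ^ 2 * ε := by
  have hjoint := hasGaussianLaw_dotProduct_prodMk (Xᵀ α) (Xᵀ β)
  have hvar := abs_variance_dotProduct_column_sub_one_le hX
  rcases eq_or_ne α β with rfl | hne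
  · have hle := abs_le.1 (hvar α)
    simp only [← sq, Matrix.one_apply_eq]
    grw [hσ.abs_integral_sq_comp_sub_one_le hjoint.fst (integral_dotProduct_pi_gaussianReal _)
      (by linarith), hvar α]
    have hε₀ : 0 ≤ ε := (abs_nonneg _).trans (hX α α)
    gcongr
    norm_num
  · rw [Matrix.one_apply_ne hne, sub_zero]
    refine hσ.abs_integral_comp_mul_comp_le hjoint (integral_dotProduct_pi_gaussianReal _)
      (integral_dotProduct_pi_gaussianReal _) hε (hvar α) (hvar β) ?_
    rw [covariance_dotProduct_pi_gaussianReal]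
    simpa [Matrix.mul_apply, dotProduct, Matrix.one_apply_ne hne] using hX α β

theorem isSubExponential_features (hσ : IsNormalizedActivation σ K)
    (hX : HasNearlyOrthonormalColumns ε X) (hε : ε ≤ 1) (α β : κ) :
    IsSubExponential (fun w ↦ σ (w ⬝ᵥ Xᵀ α) * σ (w ⬝ᵥ Xᵀ β)) (16 * K ^ 2)
      (Measure.pi fun _ : ι ↦ gaussianReal 0 1) := by
  have hvar (γ : κ) : Var[fun w ↦ w ⬝ᵥ Xᵀ γ; Measure.pi fun _ : ι ↦ gaussianReal 0 1] ≤ 2 := by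
    linarith [(abs_le.1 (abs_variance_dotProduct_column_sub_one_le hX γ)).2]
  have hjoint := hasGaussianLaw_dotProduct_prodMk (Xᵀ α) (Xᵀ β)
  exact hσ.isSubExponential_comp_mul_comp
    hjoint.fst (integral_dotProduct_pi_gaussianReal _) (hvar α)
    hjoint.snd (integral_dotProduct_pi_gaussianReal _) (hvar β)

theorem measureReal_abs_gram_featureMatrix_sub_one_gt_le (hσ : IsNormalizedActivation σ K)
    (hX : HasNearlyOrthonormalColumns ε X) (hε : ε ≤ 1) (α β : κ) :
    (Measure.pi fun _ : m ↦ Measure.pi fun _ : ι ↦ gaussianReal 0 1).real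
        {W | 168 * K ^ 2 * ε <
          |((featureMatrix σ X W)ᵀ * featureMatrix σ X W) α β - (1 : Matrix κ κ ℝ) α β|} ≤
      2 * Real.exp (-(Fintype.card m * ε ^ 2)) := by
  have hK : (0 : ℝ) < 16 * K ^ 2 := by
    have := one_pos.trans_le hσ.one_le
    positivity
  refine (measureReal_mono fun W hW ↦ ?_).trans (measureReal_abs_average_sub_integral_ge_le
    (isSubExponential_features hσ hX hε α β) hK ((abs_nonneg _).trans (hX α α)) hε)
  have hmean := abs_integral_features_sub_one_apply_le hσ hX hε α β
  rw [Set.mem_ofPred_eq, transpose_featureMatrix_mul_self_apply] at hW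
  rw [Set.mem_ofPred_eq]
  linarith [abs_sub_le ((Fintype.card m : ℝ)⁻¹ * ∑ k, σ (W k ⬝ᵥ Xᵀ α) * σ (W k ⬝ᵥ Xᵀ β))
    (∫ w, σ (w ⬝ᵥ Xᵀ α) * σ (w ⬝ᵥ Xᵀ β) ∂(Measure.pi fun _ : ι ↦ gaussianReal 0 1))
    ((1 : Matrix κ κ ℝ) α β)]

theorem column_concentration_general [Fintype κ] (hσ : IsNormalizedActivation σ K)
    (hX : HasNearlyOrthonormalColumns ε X) (hε : ε ≤ 1) :
    ENNReal.ofReal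
        (1 - 2 * (Fintype.card κ : ℝ) ^ 2 * Real.exp (-(Fintype.card m * ε ^ 2))) ≤
      (Measure.pi fun _ : m ↦ Measure.pi fun _ : ι ↦ gaussianReal 0 1)
        {W | HasNearlyOrthonormalColumns (168 * K ^ 2 * ε) (featureMatrix σ X W)} := by
  refine ofReal_one_sub_le_measure_of_measureReal_compl_le ?_
  have hcompl : {W : m → ι → ℝ |
      HasNearlyOrthonormalColumns (168 * K ^ 2 * ε) (featureMatrix σ X W)}ᶜ =
      ⋃ p : κ × κ, {W | 168 * K ^ 2 * ε <
        |((featureMatrix σ X W)ᵀ * featureMatrix σ X W) p.1 p.2 -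
          (1 : Matrix κ κ ℝ) p.1 p.2|} := by
    ext W
    simp [HasNearlyOrthonormalColumns]
  rw [hcompl]
  refine (measureReal_iUnion_fintype_le _).trans ((Finset.sum_le_sum fun p _ ↦
    measureReal_abs_gram_featureMatrix_sub_one_gt_le hσ hX hε p.1 p.2).trans_eq ?_)
  simp only [Finset.sum_const, Finset.card_univ, Fintype.card_prod, nsmul_eq_mul, Nat.cast_mul]
  ring

end RandomFeatures

theorem column_concentration :
    ∃ C : ℝ, 0 < C ∧ ∃ c : ℝ, 0 < c ∧
      ∀ (d n dc : ℕ) (X : Matrix (Fin d) (Fin n) ℝ) (ε B lamσ : ℝ)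
        (σ σ' σ'' : ℝ → ℝ),
        (∀ x, HasDerivAt σ (σ' x) x) →
        (∀ x, HasDerivAt σ' (σ'' x) x) →
        (∀ x, |σ' x| ≤ lamσ) →
        (∀ x, |σ'' x| ≤ lamσ) →
        (∫ x, σ x ∂stdGaussian) = 0 →
        (∫ x, (σ x) ^ 2 ∂stdGaussian) = 1 →
        IsOrthonormal ε B X →
        ε < 1 / lamσ →
        gaussianMat dc d
            {W | (∀ α : Fin n,
                |(∑ k, ((Real.sqrt dc)⁻¹ • ((Matrix.of W * X).map σ)) k α ^ 2) - 1| ≤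
                  C * lamσ ^ 2 * ε) ∧
              ∀ α β : Fin n, α ≠ β →
                |∑ k, ((Real.sqrt dc)⁻¹ • ((Matrix.of W * X).map σ)) k α *
                    ((Real.sqrt dc)⁻¹ • ((Matrix.of W * X).map σ)) k β| ≤
                  C * lamσ ^ 2 * ε} ≥
          ENNReal.ofReal (1 - 2 * (n : ℝ) ^ 2 * Real.exp (-c * dc * ε ^ 2)) := by
  refine ⟨168, by norm_num, 1, one_pos, ?_⟩
  intro d n dc X ε B lamσ σ σ' σ'' hσ' _ hlamσ _ hmean hsq hX hε
  lift lamσ to NNReal using (abs_nonneg _).trans (hlamσ 0)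
  have hσ : IsNormalizedActivation σ lamσ := .of_hasDerivAt hσ' hlamσ hmean hsq
  have hε₁ : ε ≤ 1 := by
    grw [hε, ← hσ.one_le, one_div_one]
  simpa only [hasNearlyOrthonormalColumns_iff, featureMatrix, Fintype.card_fin, neg_mul, one_mul]
    using column_concentration_general (m := Fin dc) hσ
      (hasNearlyOrthonormalColumns_iff.2 ⟨hX.1, hX.2.1⟩) hε₁
end

section
/- Let X ∈ ℝ^{d×n} be (ε,B)-orthonormal, let W ∈ ℝ^{ď×d} have i.i.d. N(0,1) entries, and let x_α, x_β be two distinct columns of X; let σ be twice differentiable with |σ'|,|σ''| ≤ λ_σ, E[σ(ξ)]=0, E[σ(ξ)²]=1 for ξ ~ N(0,1), and set b_σ = E[σ'(ξ)], a_σ = E[σ'(ξ)²]. Then there are universal constants C, c > 0 such that for any t > 0: (a) with probability at least 1 − 2e^{−c ď t²}, |(1/ď) Tr(diag(σ'(Wx_α)) diag(σ'(Wx_β))) − b_σ²| ≤ Cλ_σ²(ε + t); and (b) for any deterministic symmetric matrix M ∈ ℝ^{d×d}, with probability at least 1 − (2ď+2)e^{−c min(t²ď, t√ď)}, |(1/ď)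 Tr(diag(σ'(Wx_α)) W M Wᵀ diag(σ'(Wx_β))) − b_σ² Tr M| ≤ Cλ_σ²(ε√d + t√d + t√ď)‖M‖_F. Moreover, both (a) and (b) hold with (x_α, x_α) in place of (x_α, x_β) upon replacing b_σ² by a_σ. -/
/-!
Lemma (trace approximations for backpropagation factors): concentration of
`(1/ď)Tr(D_α D_β)` around `b_σ²` and of `(1/ď)Tr(D_α W M Wᵀ D_β)` around `b_σ² Tr M`,
together with the diagonal versions in which `b_σ²` is replaced by `a_σ`.
-/

open MeasureTheory ProbabilityTheory Filter Topology Matrix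

/-- Squared Frobenius norm. -/
def frobSq {m n : ℕ} (X : Matrix (Fin m) (Fin n) ℝ) : ℝ :=
  ∑ i, ∑ j, (X i j) ^ 2

/-!
The rows `w` of `W` are i.i.d. standard Gaussian, and both traces are averages over them: of
`σ'(⟪x_α, w⟫) σ'(⟪x_β, w⟫)`, and of this product times the quadratic form `wᵀ M w`.

The product has mean `b_σ ^ 2` up to `O(λ_σ ^ 2 ε)`: replacing `x_β` by its component orthogonal to
`x_α` costs `O(λ_σ ^ 2 ε)` because `σ'` is Lipschitz, and Gaussian linear forms along orthogonal
vectors are independent. Hoeffding's inequality for the average of the bounded products gives (a).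

For (b), the Hanson–Wright inequality and a union bound put every row's quadratic form within
`O(t √ď ‖M‖_F)` of `Tr M`. Since the weights are bounded, the quadratic forms may then be replaced
by the constant `Tr M`, whose weight is controlled by (a), and `|Tr M| ≤ √d ‖M‖_F`.
-/

open scoped NNReal RealInnerProductSpace Matrix.Norms.Frobenius

section Probability

variable {Ω : Type*} [MeasurableSpace Ω] {μ : Measure Ω}

theorem ofReal_one_sub_le_measure [IsProbabilityMeasure μ] {S T : Set Ω} {p : ℝ}
    (hST : Sᶜ ⊆ T) (hT : μ.real T ≤ p) : ENNReal.ofReal (1 - p) ≤ μ S := by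
  have hcover : 1 ≤ μ.real S + μ.real Sᶜ := by
    simpa using measureReal_union_le (μ := μ) S Sᶜ
  rw [ENNReal.ofReal_le_iff_le_toReal (measure_ne_top _ _)]
  change 1 - p ≤ μ.real S
  linarith [measureReal_mono (μ := μ) hST]

theorem measureReal_lt_abs_le [IsFiniteMeasure μ] {Y : Ω → ℝ} {a p : ℝ}
    (hpos : μ.real {ω | a ≤ Y ω} ≤ p) (hneg : μ.real {ω | a ≤ -Y ω} ≤ p) :
    μ.real {ω | a < |Y ω|} ≤ 2 * p := by
  have hsub : {ω | a < |Y ω|} ⊆ {ω | a ≤ Y ω} ∪ {ω | a ≤ -Y ω} :=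
    fun ω hω => (lt_abs.1 hω).imp (fun h : a < Y ω => h.le) fun h : a < -Y ω => h.le
  linarith [measureReal_mono (μ := μ) hsub,
    measureReal_union_le (μ := μ) {ω | a ≤ Y ω} {ω | a ≤ -Y ω}]

theorem abs_integral_le_of_abs_le [IsProbabilityMeasure μ] {f : Ω → ℝ} {A : ℝ}
    (hf : ∀ ω, |f ω| ≤ A) : |∫ ω, f ω ∂μ| ≤ A := by
  simpa using norm_integral_le_of_norm_le_const (μ := μ) (f := f) (C := A)
    (ae_of_all _ hf)

theorem integrable_comp_of_lipschitzWith [IsFiniteMeasure μ] {K : ℝ≥0} {g : ℝ → ℝ}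
    (hg : LipschitzWith K g) {Y : Ω → ℝ} (hY : Integrable Y μ) :
    Integrable (fun ω => g (Y ω)) μ := by
  refine ((integrable_const |g 0|).add (hY.abs.const_mul K)).mono'
    (hg.continuous.comp_aestronglyMeasurable hY.aestronglyMeasurable) (ae_of_all _ fun ω => ?_)
  have hdist : |g (Y ω) - g 0| ≤ K * |Y ω| := by
    simpa [Real.dist_eq] using hg.dist_le_mul (Y ω) 0
  simp only [Real.norm_eq_abs, Pi.add_apply]
  linarith [abs_sub_abs_le_abs_sub (g (Y ω)) (g 0)]

section IidSample

variable {κ : Type*} [Fintype κ] [IsProbabilityMeasure μ]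

theorem measureReal_pi_exists_mem_le {A : Set Ω} (hA : MeasurableSet A) :
    (Measure.pi fun _ : κ => μ).real {ω | ∃ k, ω k ∈ A} ≤ Fintype.card κ * μ.real A := by
  have hunion : {ω : κ → Ω | ∃ k, ω k ∈ A} = ⋃ k, Function.eval k ⁻¹' A := by
    ext; simp
  have hmarginal (k : κ) :
      (Measure.pi fun _ : κ => μ).real (Function.eval k ⁻¹' A) = μ.real A :=
    (measurePreserving_eval (fun _ => μ) k).measureReal_preimage hA.nullMeasurableSet
  calc (Measure.pi fun _ : κ => μ).real {ω | ∃ k, ω k ∈ A}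
      ≤ ∑ k, (Measure.pi fun _ : κ => μ).real (Function.eval k ⁻¹' A) :=
        hunion ▸ measureReal_iUnion_fintype_le _
    _ = Fintype.card κ * μ.real A := by simp [hmarginal]

variable {f : Ω → ℝ} {A t : ℝ}

theorem hasSubgaussianMGF_eval_sub_integral (hf : Measurable f) (hA : ∀ ω, |f ω| ≤ A) (k : κ) :
    HasSubgaussianMGF (fun ω : κ → Ω => f (ω k) - ∫ x, f x ∂μ) (‖A‖₊ ^ 2)
      (Measure.pi fun _ : κ => μ) := by
  have heval := measurePreserving_eval (fun _ : κ => μ) k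
  have hmean : ∫ ω, f (ω k) ∂(Measure.pi fun _ : κ => μ) = ∫ x, f x ∂μ := by
    conv_rhs => rw [← heval.map_eq]
    exact (integral_map heval.measurable.aemeasurable hf.aestronglyMeasurable).symm
  have hwidth : ‖A - -A‖₊ / 2 = ‖A‖₊ := by
    rw [sub_neg_eq_add, ← two_mul, nnnorm_mul]
    simp
  rw [← hmean, ← hwidth]
  exact hasSubgaussianMGF_of_mem_Icc (hf.comp (measurable_pi_apply k)).aemeasurable
    (ae_of_all _ fun ω => abs_le.1 (hA (ω k)))

theorem measureReal_pi_le_sum_sub_integral_le (hf : Measurable f) (hA₀ : 0 < A)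
    (hA : ∀ ω, |f ω| ≤ A) (ht : 0 ≤ t) :
    (Measure.pi fun _ : κ => μ).real
        {ω | Fintype.card κ * (A * t) ≤ ∑ k, (f (ω k) - ∫ x, f x ∂μ)} ≤
      Real.exp (-(1 / 2) * Fintype.card κ * t ^ 2) := by
  have hindep : iIndepFun (fun (k : κ) (ω : κ → Ω) => f (ω k) - ∫ x, f x ∂μ)
      (Measure.pi fun _ : κ => μ) :=
    iIndepFun_pi (X := fun _ x => f x - ∫ x, f x ∂μ) fun _ => (hf.sub_const _).aemeasurable
  refine (HasSubgaussianMGF.measure_sum_ge_le_of_iIndepFun hindep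
    (fun k _ => hasSubgaussianMGF_eval_sub_integral hf hA k) (by positivity)).trans_eq ?_
  congr 1
  rcases isEmpty_or_nonempty κ with _ | _
  · simp
  · have hcard : (Fintype.card κ : ℝ) ≠ 0 := by positivity
    simp only [Finset.sum_const, Finset.card_univ, nsmul_eq_mul, NNReal.coe_mul,
      NNReal.coe_natCast, NNReal.coe_pow, coe_nnnorm, Real.norm_eq_abs, sq_abs]
    field_simp

theorem measureReal_pi_lt_abs_average_sub_integral_le [Nonempty κ] (hf : Measurable f)
    (hA : ∀ ω, |f ω| ≤ A) (ht : 0 ≤ t) :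
    (Measure.pi fun _ : κ => μ).real
        {ω | A * t < |(Fintype.card κ : ℝ)⁻¹ * ∑ k, f (ω k) - ∫ x, f x ∂μ|} ≤
      2 * Real.exp (-(1 / 2) * Fintype.card κ * t ^ 2) := by
  have hΩ : Nonempty Ω := μ.nonempty_of_neZero
  have hcard : (0 : ℝ) < Fintype.card κ := by positivity
  rcases ((abs_nonneg _).trans (hA hΩ.some)).eq_or_lt with rfl | hA₀
  · have hzero (x : Ω) : f x = 0 := abs_nonpos_iff.1 (hA x)
    simpa [hzero] using (Real.exp_pos _).le
  refine measureReal_lt_abs_le ?_ ?_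
  · convert measureReal_pi_le_sum_sub_integral_le (κ := κ) (μ := μ) hf hA₀ hA ht using 4
    rw [Finset.sum_sub_distrib, ← mul_le_mul_iff_right₀ hcard]
    simp [mul_sub, hcard.ne']
  · convert measureReal_pi_le_sum_sub_integral_le (κ := κ) (μ := μ) hf.neg hA₀ (by simpa using hA)
      ht using 4
    rw [Finset.sum_sub_distrib, ← mul_le_mul_iff_right₀ hcard]
    simp [mul_sub, hcard.ne', integral_neg, add_comm, ← sub_eq_add_neg]

theorem ofReal_le_pi_abs_average_sub_le [Nonempty κ] (hf : Measurable f) (hA : ∀ ω, |f ω| ≤ A)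
    (ht : 0 ≤ t) {m δ : ℝ} (hm : |∫ x, f x ∂μ - m| ≤ δ) :
    ENNReal.ofReal (1 - 2 * Real.exp (-(1 / 2) * Fintype.card κ * t ^ 2)) ≤
      (Measure.pi fun _ : κ => μ)
        {ω | |(Fintype.card κ : ℝ)⁻¹ * ∑ k, f (ω k) - m| ≤ A * t + δ} := by
  refine ofReal_one_sub_le_measure (fun ω hω => ?_)
    (measureReal_pi_lt_abs_average_sub_integral_le hf hA ht)
  contrapose! hω
  simp only [Set.mem_ofPred_eq, not_lt, Set.notMem_compl_iff] at hω ⊢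
  exact (abs_sub_le _ (∫ x, f x ∂μ) _).trans (add_le_add hω hm)

end IidSample

end Probability

section GaussianLinearForms

theorem integral_abs_gaussianReal_zero_one_le : ∫ z, |z| ∂gaussianReal 0 1 ≤ 1 := by
  have hsq : Integrable (fun z : ℝ => z ^ 2) (gaussianReal 0 1) :=
    (IsGaussian.memLp_two_id (μ := gaussianReal 0 1)).integrable_sq
  have hmoment : ∫ z, z ^ 2 ∂gaussianReal 0 1 = 1 := by
    simpa [variance_eq_integral aemeasurable_id] using
      variance_id_gaussianReal (μ := 0) (v := 1)
  calc ∫ z, |z| ∂gaussianReal 0 1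
      ≤ ∫ z, (1 + z ^ 2) / 2 ∂gaussianReal 0 1 :=
        integral_mono (IsGaussian.integrable_id (μ := gaussianReal 0 1)).abs
          (((integrable_const 1).add hsq).div_const 2)
          fun z => by simp only; nlinarith [sq_nonneg (|z| - 1), sq_abs z]
    _ = 1 := by
        rw [integral_div, integral_add (integrable_const 1) hsq, hmoment]
        norm_num

variable {E : Type*} [NormedAddCommGroup E] [InnerProductSpace ℝ E] [FiniteDimensional ℝ E]
  [MeasurableSpace E] [BorelSpace E]

theorem map_inner_stdGaussian (x : E) :
    (ProbabilityTheory.stdGaussian E).map (fun w => ⟪x, w⟫) =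
      (gaussianReal 0 1).map (‖x‖ * ·) := by
  change (ProbabilityTheory.stdGaussian E).map (innerSL ℝ x) = _
  rw [IsGaussian.map_eq_gaussianReal, integral_strongDual_stdGaussian, variance_dual_stdGaussian,
    innerSL_apply_norm, gaussianReal_map_const_mul]
  congr 1
  · simp
  · ext
    simp

theorem integral_comp_inner_stdGaussian {g : ℝ → ℝ} (hg : Measurable g) (x : E) :
    ∫ w, g ⟪x, w⟫ ∂ProbabilityTheory.stdGaussian E = ∫ z, g (‖x‖ * z) ∂gaussianReal 0 1 := by
  rw [← integral_map (φ := (‖x‖ * ·)) (by fun_prop) hg.aestronglyMeasurable,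
    ← map_inner_stdGaussian,
    integral_map (Measurable.aemeasurable (by fun_prop)) hg.aestronglyMeasurable]

theorem integrable_inner_stdGaussian (x : E) :
    Integrable (fun w => ⟪x, w⟫) (ProbabilityTheory.stdGaussian E) :=
  (innerSL ℝ x).integrable_comp IsGaussian.integrable_id

theorem integral_abs_inner_stdGaussian_le (x : E) :
    ∫ w, |⟪x, w⟫| ∂ProbabilityTheory.stdGaussian E ≤ ‖x‖ := by
  rw [integral_comp_inner_stdGaussian (g := fun z => |z|) (by fun_prop)]
  simp only [abs_mul, abs_norm, integral_const_mul]
  exact mul_le_of_le_one_right (norm_nonneg x) integral_abs_gaussianReal_zero_one_le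

theorem indepFun_inner_stdGaussian {x y : E} (hxy : ⟪x, y⟫ = 0) :
    IndepFun (fun w => ⟪x, w⟫) (fun w => ⟪y, w⟫) (ProbabilityTheory.stdGaussian E) := by
  have hgauss : HasGaussianLaw (fun w : E => w) (ProbabilityTheory.stdGaussian E) :=
    ⟨by simpa using isGaussian_stdGaussian⟩
  refine HasGaussianLaw.indepFun_of_covariance_eq_zero
    (hgauss.map ((innerSL ℝ x).prod (innerSL ℝ y))) ?_
  rw [← covarianceBilin_apply_eq_cov IsGaussian.memLp_two_id, covarianceBilin_stdGaussian]
  exact hxy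

variable {K : ℝ≥0} {g : ℝ → ℝ}

theorem abs_integral_comp_inner_sub_integral_le (hg : LipschitzWith K g) (x : E) :
    |∫ w, g ⟪x, w⟫ ∂ProbabilityTheory.stdGaussian E - ∫ z, g z ∂gaussianReal 0 1| ≤
      K * |‖x‖ - 1| := by
  have hid : Integrable (fun z : ℝ => z) (gaussianReal 0 1) := IsGaussian.integrable_id
  have hscaled := integrable_comp_of_lipschitzWith hg (hid.const_mul ‖x‖)
  have hstd := integrable_comp_of_lipschitzWith hg hid
  rw [integral_comp_inner_stdGaussian hg.continuous.measurable, ← integral_sub hscaled hstd]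
  calc |∫ z, (g (‖x‖ * z) - g z) ∂gaussianReal 0 1|
      ≤ ∫ z, |g (‖x‖ * z) - g z| ∂gaussianReal 0 1 := abs_integral_le_integral_abs
    _ ≤ ∫ z, K * |‖x‖ - 1| * |z| ∂gaussianReal 0 1 := by
        refine integral_mono (hscaled.sub hstd).abs (hid.abs.const_mul _) fun z => ?_
        simpa [Real.dist_eq, mul_assoc, ← abs_mul, sub_mul] using hg.dist_le_mul (‖x‖ * z) z
    _ ≤ K * |‖x‖ - 1| := by
        rw [integral_const_mul]
        exact mul_le_of_le_one_right (by positivity) integral_abs_gaussianReal_zero_one_le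

theorem abs_integral_mul_comp_inner_sub_le {f : E → ℝ} {A : ℝ} (hf : Measurable f)
    (hA : ∀ w, |f w| ≤ A) (hg : LipschitzWith K g) (y z : E) :
    |∫ w, f w * g ⟪y, w⟫ ∂ProbabilityTheory.stdGaussian E -
        ∫ w, f w * g ⟪z, w⟫ ∂ProbabilityTheory.stdGaussian E| ≤ A * K * ‖y - z‖ := by
  have hA₀ : 0 ≤ A := (abs_nonneg _).trans (hA 0)
  have hint (v : E) :
      Integrable (fun w => f w * g ⟪v, w⟫) (ProbabilityTheory.stdGaussian E) :=
    (integrable_comp_of_lipschitzWith hg (integrable_inner_stdGaussian v)).bdd_mul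
      hf.aestronglyMeasurable (ae_of_all _ hA)
  rw [← integral_sub (hint y) (hint z)]
  calc |∫ w, (f w * g ⟪y, w⟫ - f w * g ⟪z, w⟫) ∂ProbabilityTheory.stdGaussian E|
      ≤ ∫ w, |f w * g ⟪y, w⟫ - f w * g ⟪z, w⟫| ∂ProbabilityTheory.stdGaussian E :=
        abs_integral_le_integral_abs
    _ ≤ ∫ w, A * K * |⟪y - z, w⟫| ∂ProbabilityTheory.stdGaussian E := by
        refine integral_mono ((hint y).sub (hint z)).abs
          ((integrable_inner_stdGaussian _).abs.const_mul _) fun w => ?_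
        have hlip : |g ⟪y, w⟫ - g ⟪z, w⟫| ≤ K * |⟪y - z, w⟫| := by
          simpa [Real.dist_eq, inner_sub_left] using hg.dist_le_mul ⟪y, w⟫ ⟪z, w⟫
        simp only [← mul_sub, abs_mul, mul_assoc]
        exact mul_le_mul (hA w) hlip (abs_nonneg _) hA₀
    _ ≤ A * K * ‖y - z‖ := by
        rw [integral_const_mul]
        gcongr
        exact integral_abs_inner_stdGaussian_le _

variable {A : ℝ≥0}

theorem abs_mul_le_sq_of_abs_le (hA : ∀ z, |g z| ≤ A) (y z : ℝ) : |g y * g z| ≤ A ^ 2 := by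
  rw [abs_mul, sq]
  exact mul_le_mul (hA y) (hA z) (abs_nonneg _) A.coe_nonneg

theorem lipschitzWith_sq_of_abs_le (hA : ∀ z, |g z| ≤ A) (hg : LipschitzWith K g) :
    LipschitzWith (2 * A * K) fun z => g z ^ 2 := by
  refine LipschitzWith.of_dist_le_mul fun a b => ?_
  have hsum : |g a + g b| ≤ 2 * A := (abs_add_le _ _).trans (by linarith [hA a, hA b])
  calc dist (g a ^ 2) (g b ^ 2) = |g a + g b| * dist (g a) (g b) := by
        rw [Real.dist_eq, Real.dist_eq, sq_sub_sq, abs_mul]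
    _ ≤ 2 * A * (K * dist a b) := by
        gcongr
        exact hg.dist_le_mul a b
    _ = ↑(2 * A * K) * dist a b := by push_cast; ring

theorem abs_integral_mul_comp_inner_sub_sq_le_of_inner_eq_zero (hA : ∀ z, |g z| ≤ A)
    (hg : LipschitzWith K g) {x y : E} (hxy : ⟪x, y⟫ = 0) :
    |∫ w, g ⟪x, w⟫ * g ⟪y, w⟫ ∂ProbabilityTheory.stdGaussian E -
        (∫ z, g z ∂gaussianReal 0 1) ^ 2| ≤ A * K * (|‖x‖ - 1| + |‖y‖ - 1|) := by
  have hgc := hg.continuous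
  have hprod : ∫ w, g ⟪x, w⟫ * g ⟪y, w⟫ ∂ProbabilityTheory.stdGaussian E =
      (∫ w, g ⟪x, w⟫ ∂ProbabilityTheory.stdGaussian E) *
        ∫ w, g ⟪y, w⟫ ∂ProbabilityTheory.stdGaussian E :=
    (indepFun_inner_stdGaussian hxy).integral_fun_comp_mul_comp
      (Measurable.aemeasurable (by fun_prop)) (Measurable.aemeasurable (by fun_prop))
      (by fun_prop) (by fun_prop)
  have hx := abs_integral_comp_inner_sub_integral_le hg x
  have hy := abs_integral_comp_inner_sub_integral_le hg y
  have hIy : |∫ w, g ⟪y, w⟫ ∂ProbabilityTheory.stdGaussian E| ≤ A :=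
    abs_integral_le_of_abs_le fun w => hA _
  have hb : |∫ z, g z ∂gaussianReal 0 1| ≤ A := abs_integral_le_of_abs_le hA
  rw [hprod]
  generalize ∫ w, g ⟪x, w⟫ ∂ProbabilityTheory.stdGaussian E = Ix at hx ⊢
  generalize ∫ w, g ⟪y, w⟫ ∂ProbabilityTheory.stdGaussian E = Iy at hy hIy ⊢
  generalize ∫ z, g z ∂gaussianReal 0 1 = b at hx hy hb ⊢
  calc |Ix * Iy - b ^ 2| = |Iy * (Ix - b) + b * (Iy - b)| := by ring_nf
    _ ≤ |Iy| * |Ix - b| + |b| * |Iy - b| := by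
        simpa only [abs_mul] using abs_add_le (Iy * (Ix - b)) (b * (Iy - b))
    _ ≤ A * (K * |‖x‖ - 1|) + A * (K * |‖y‖ - 1|) := by gcongr
    _ = A * K * (|‖x‖ - 1| + |‖y‖ - 1|) := by ring

end GaussianLinearForms

section NearlyOrthonormalPair

theorem abs_sub_one_le_abs_sq_sub_one {r : ℝ} (hr : 0 ≤ r) : |r - 1| ≤ |r ^ 2 - 1| := by
  have hfactor : r ^ 2 - 1 = (r - 1) * (r + 1) := by ring
  rw [hfactor, abs_mul, abs_of_nonneg (by positivity : 0 ≤ r + 1)]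
  exact le_mul_of_one_le_right (abs_nonneg _) (by linarith)

variable {E : Type*} [NormedAddCommGroup E] [InnerProductSpace ℝ E]

theorem exists_inner_eq_zero_norm_sub_le {x y : E} {ε : ℝ} (hx : 1 / 2 ≤ ‖x‖)
    (hxy : |⟪x, y⟫| ≤ ε) : ∃ z : E, ⟪x, z⟫ = 0 ∧ ‖y - z‖ ≤ 2 * ε := by
  have hx₀ : 0 < ‖x‖ := by linarith
  refine ⟨y - (⟪x, y⟫ / ‖x‖ ^ 2) • x, ?_, ?_⟩
  · rw [inner_sub_right, inner_smul_right, real_inner_self_eq_norm_sq]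
    field_simp
    ring
  · rw [sub_sub_cancel, norm_smul, norm_div, norm_pow, norm_norm, Real.norm_eq_abs]
    calc |⟪x, y⟫| / ‖x‖ ^ 2 * ‖x‖ = |⟪x, y⟫| / ‖x‖ := by field_simp
      _ ≤ 2 * ε := by
        rw [div_le_iff₀ hx₀]
        nlinarith [abs_nonneg ⟪x, y⟫]

variable [FiniteDimensional ℝ E] [MeasurableSpace E] [BorelSpace E] {L : ℝ≥0} {g : ℝ → ℝ}

theorem abs_integral_sq_comp_inner_sub_le (hL : ∀ z, |g z| ≤ L) (hg : LipschitzWith L g)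
    {x : E} {ε : ℝ} (hx : |‖x‖ ^ 2 - 1| ≤ ε) :
    |∫ w, g ⟪x, w⟫ ^ 2 ∂ProbabilityTheory.stdGaussian E - ∫ z, g z ^ 2 ∂gaussianReal 0 1| ≤
      2 * L ^ 2 * ε := by
  refine (abs_integral_comp_inner_sub_integral_le (lipschitzWith_sq_of_abs_le hL hg) x).trans ?_
  push_cast
  rw [mul_assoc 2, ← sq]
  gcongr
  exact (abs_sub_one_le_abs_sq_sub_one (norm_nonneg x)).trans hx

theorem abs_integral_mul_comp_inner_sub_sq_le (hL : ∀ z, |g z| ≤ L) (hg : LipschitzWith L g)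
    {x y : E} {ε : ℝ} (hx : |‖x‖ ^ 2 - 1| ≤ ε) (hy : |‖y‖ ^ 2 - 1| ≤ ε) (hxy : |⟪x, y⟫| ≤ ε) :
    |∫ w, g ⟪x, w⟫ * g ⟪y, w⟫ ∂ProbabilityTheory.stdGaussian E -
        (∫ z, g z ∂gaussianReal 0 1) ^ 2| ≤ 6 * L ^ 2 * ε := by
  have hgc := hg.continuous
  -- For `ε` bounded below the trivial bound suffices; otherwise `x` is long enough to project
  -- `y` off it at cost `O(ε)`.
  rcases le_or_gt (1 / 2) ε with hε | hε
  · have hprod : |∫ w, g ⟪x, w⟫ * g ⟪y, w⟫ ∂ProbabilityTheory.stdGaussian E| ≤ L ^ 2 :=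
      abs_integral_le_of_abs_le fun w => abs_mul_le_sq_of_abs_le hL _ _
    have hsq : |(∫ z, g z ∂gaussianReal 0 1) ^ 2| ≤ (L : ℝ) ^ 2 := by
      rw [abs_pow]
      exact pow_le_pow_left₀ (abs_nonneg _) (abs_integral_le_of_abs_le hL) 2
    refine (abs_sub _ _).trans ?_
    nlinarith [sq_nonneg (L : ℝ)]
  · have hx' := (abs_sub_one_le_abs_sq_sub_one (norm_nonneg x)).trans hx
    have hy' := (abs_sub_one_le_abs_sq_sub_one (norm_nonneg y)).trans hy
    obtain ⟨z, hxz, hyz⟩ :=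
      exists_inner_eq_zero_norm_sub_le (by linarith [(abs_le.1 hx').1]) hxy
    have hz' : |‖z‖ - 1| ≤ 3 * ε := by
      linarith [abs_sub_le ‖z‖ ‖y‖ 1, abs_norm_sub_norm_le z y, norm_sub_rev z y]
    have hreplace := abs_integral_mul_comp_inner_sub_le (A := L)
      (f := fun w : E => g ⟪x, w⟫) (Continuous.measurable (by fun_prop)) (fun _ => hL _) hg y z
    have horth := abs_integral_mul_comp_inner_sub_sq_le_of_inner_eq_zero hL hg hxz
    refine (abs_sub_le _ _ _).trans ((add_le_add hreplace horth).trans ?_)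
    calc (L : ℝ) * L * ‖y - z‖ + L * L * (|‖x‖ - 1| + |‖z‖ - 1|)
        ≤ L * L * (2 * ε) + L * L * (ε + 3 * ε) := by gcongr
      _ = 6 * L ^ 2 * ε := by ring

end NearlyOrthonormalPair

section GaussianChaos

theorem inv_one_sub_le_exp_add_sq {x : ℝ} (hx : x ≤ 1 / 4) :
    (1 - x)⁻¹ ≤ Real.exp (x + x ^ 2) := by
  rw [inv_le_iff_one_le_mul₀ (by linarith)]
  rcases le_total x 0 with hx₀ | hx₀
  · have hcubic : 0 ≤ -x ^ 3 := by
      nlinarith [mul_nonneg (neg_nonneg.2 hx₀) (sq_nonneg x)]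
    calc 1 ≤ (x + x ^ 2 + 1) * (1 - x) := by linarith
      _ ≤ Real.exp (x + x ^ 2) * (1 - x) :=
        mul_le_mul_of_nonneg_right (Real.add_one_le_exp _) (by linarith)
  · have hexp : 1 + x + 3 / 2 * x ^ 2 ≤ Real.exp (x + x ^ 2) := by
      have := Real.quadratic_le_exp_of_nonneg (x := x + x ^ 2) (by positivity)
      nlinarith [pow_nonneg hx₀ 3, pow_nonneg hx₀ 4]
    calc 1 ≤ (1 + x + 3 / 2 * x ^ 2) * (1 - x) := by
          nlinarith [mul_nonneg (sq_nonneg x) (by linarith : 0 ≤ 1 - 3 * x)]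
      _ ≤ Real.exp (x + x ^ 2) * (1 - x) := mul_le_mul_of_nonneg_right hexp (by linarith)

theorem gaussianPDFReal_mul_exp_mul_sq_sub_one (a z : ℝ) :
    gaussianPDFReal 0 1 z * Real.exp (a * (z ^ 2 - 1)) =
      (√(2 * Real.pi))⁻¹ * Real.exp (-a) * Real.exp (-(1 / 2 - a) * z ^ 2) := by
  simp only [gaussianPDFReal, NNReal.coe_one, mul_one, sub_zero]
  rw [mul_assoc, mul_assoc, ← Real.exp_add, ← Real.exp_add]
  ring_nf

theorem integrable_exp_mul_sq_sub_one_gaussianReal {a : ℝ} (ha : a < 1 / 2) :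
    Integrable (fun z => Real.exp (a * (z ^ 2 - 1))) (gaussianReal 0 1) := by
  rw [gaussianReal_of_var_ne_zero _ one_ne_zero,
    integrable_withDensity_iff_integrable_smul' (measurable_gaussianPDF _ _)
      (ae_of_all _ fun _ => gaussianPDF_lt_top)]
  simp only [toReal_gaussianPDF, smul_eq_mul, gaussianPDFReal_mul_exp_mul_sq_sub_one]
  exact (integrable_exp_neg_mul_sq (sub_pos.2 ha)).const_mul _

theorem integral_exp_mul_sq_sub_one_gaussianReal {a : ℝ} (ha : a < 1 / 2) :
    ∫ z, Real.exp (a * (z ^ 2 - 1)) ∂gaussianReal 0 1 = Real.exp (-a) * √(1 - 2 * a)⁻¹ := by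
  rw [integral_gaussianReal_eq_integral_smul one_ne_zero]
  simp only [smul_eq_mul, gaussianPDFReal_mul_exp_mul_sq_sub_one]
  rw [integral_const_mul, integral_gaussian, mul_comm (√(2 * Real.pi))⁻¹, mul_assoc,
    ← Real.sqrt_inv, ← Real.sqrt_mul (by positivity)]
  congr 2
  have : 1 - 2 * a ≠ 0 := by linarith
  have : 1 / 2 - a ≠ 0 := by linarith
  field_simp

theorem integral_exp_mul_sq_sub_one_gaussianReal_le {a : ℝ} (ha : a ≤ 1 / 8) :
    ∫ z, Real.exp (a * (z ^ 2 - 1)) ∂gaussianReal 0 1 ≤ Real.exp (2 * a ^ 2) := by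
  have hsqrt : √(1 - 2 * a)⁻¹ ≤ Real.exp (a + 2 * a ^ 2) := by
    refine Real.sqrt_le_iff.2 ⟨(Real.exp_pos _).le, ?_⟩
    refine (inv_one_sub_le_exp_add_sq (x := 2 * a) (by linarith)).trans_eq ?_
    rw [← Real.exp_nat_mul]
    push_cast
    ring_nf
  calc ∫ z, Real.exp (a * (z ^ 2 - 1)) ∂gaussianReal 0 1
      = Real.exp (-a) * √(1 - 2 * a)⁻¹ :=
        integral_exp_mul_sq_sub_one_gaussianReal (by linarith)
    _ ≤ Real.exp (-a) * Real.exp (a + 2 * a ^ 2) := by gcongr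
    _ = Real.exp (2 * a ^ 2) := by
        rw [← Real.exp_add]
        ring_nf

variable {ι : Type*} [Fintype ι]

theorem integrable_exp_mul_sum_mul_sq_sub_one {c : ι → ℝ} {u : ℝ} (hc : ∀ i, u * c i ≤ 1 / 8) :
    Integrable (fun w : ι → ℝ => Real.exp (u * ∑ i, c i * (w i ^ 2 - 1)))
      (Measure.pi fun _ => gaussianReal 0 1) := by
  simp only [Finset.mul_sum, Real.exp_sum, ← mul_assoc]
  exact Integrable.fintype_prod (f := fun i (z : ℝ) => Real.exp (u * c i * (z ^ 2 - 1)))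
    fun i => integrable_exp_mul_sq_sub_one_gaussianReal ((hc i).trans_lt (by norm_num))

theorem mgf_sum_mul_sq_sub_one_le {c : ι → ℝ} {u : ℝ} (hc : ∀ i, u * c i ≤ 1 / 8) :
    mgf (fun w : ι → ℝ => ∑ i, c i * (w i ^ 2 - 1)) (Measure.pi fun _ => gaussianReal 0 1) u ≤
      Real.exp (2 * u ^ 2 * ∑ i, c i ^ 2) := by
  have hexp : Real.exp (2 * u ^ 2 * ∑ i, c i ^ 2) = ∏ i, Real.exp (2 * (u * c i) ^ 2) := by
    simp only [Finset.mul_sum, Real.exp_sum, mul_pow, mul_assoc]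
  rw [hexp]
  simp only [mgf, Finset.mul_sum, Real.exp_sum, ← mul_assoc]
  rw [integral_fintype_prod_eq_prod (f := fun i (z : ℝ) => Real.exp (u * c i * (z ^ 2 - 1)))]
  exact Finset.prod_le_prod (fun i _ => integral_nonneg fun z => (Real.exp_pos _).le)
    fun i _ => integral_exp_mul_sq_sub_one_gaussianReal_le (hc i)

theorem measureReal_pi_le_sum_mul_sq_sub_one_le {c : ι → ℝ} {F r : ℝ} (hF : 0 < F)
    (hc : ∑ i, c i ^ 2 = F ^ 2) (hr : 0 ≤ r) :
    (Measure.pi fun _ : ι => gaussianReal 0 1).real {w | r * F ≤ ∑ i, c i * (w i ^ 2 - 1)} ≤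
      Real.exp (-(min (r ^ 2) r / 16)) := by
  -- Chernoff's bound with parameter `v / (8 * F)`; capping `v` at `1` keeps every factor of the
  -- moment generating function finite and costs the passage from `r ^ 2` to `r`.
  set v := min 1 r with hv
  have hv₀ : 0 ≤ v := le_min zero_le_one hr
  have hv₁ : v ≤ 1 := min_le_left 1 r
  have hvr : v * r = min (r ^ 2) r := by
    rw [hv, min_mul_of_nonneg _ _ hr, one_mul, ← sq, min_comm]
  have hv_sq : v ^ 2 ≤ v * r := by
    rw [sq]
    exact mul_le_mul_of_nonneg_left (min_le_right 1 r) hv₀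
  have hcF (i : ι) : c i ≤ F := by
    refine le_of_sq_le_sq (hc ▸ ?_) hF.le
    exact Finset.single_le_sum (f := fun i => c i ^ 2) (fun j _ => sq_nonneg _) (Finset.mem_univ i)
  have hu (i : ι) : v / (8 * F) * c i ≤ 1 / 8 := by
    calc v / (8 * F) * c i ≤ v / (8 * F) * F := by gcongr; exact hcF i
      _ = v / 8 := by field_simp
      _ ≤ 1 / 8 := by gcongr
  calc _ ≤ Real.exp (-(v / (8 * F)) * (r * F)) * Real.exp (2 * (v / (8 * F)) ^ 2 * ∑ i, c i ^ 2) :=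
        (measure_ge_le_exp_mul_mgf _ (by positivity)
          (integrable_exp_mul_sum_mul_sq_sub_one hu)).trans
          (mul_le_mul_of_nonneg_left (mgf_sum_mul_sq_sub_one_le hu) (Real.exp_pos _).le)
    _ = Real.exp (-(v * r) / 8 + v ^ 2 / 32) := by
        rw [← Real.exp_add, hc]
        congr 1
        field_simp
        ring
    _ ≤ Real.exp (-(min (r ^ 2) r / 16)) := by
        refine Real.exp_le_exp.2 ?_
        rw [← hvr]
        linarith [mul_nonneg hv₀ hr]

theorem measurePreserving_inner_orthonormalBasis
    (b : OrthonormalBasis ι ℝ (EuclideanSpace ℝ ι)) :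
    MeasurePreserving (fun (w : ι → ℝ) i => ⟪b i, WithLp.toLp 2 w⟫)
      (Measure.pi fun _ => gaussianReal 0 1) (Measure.pi fun _ => gaussianReal 0 1) := by
  have hcomp : (fun (w : ι → ℝ) i => ⟪b i, WithLp.toLp 2 w⟫) =
      WithLp.ofLp ∘ b.repr ∘ WithLp.toLp 2 := by
    ext w i
    simp [b.repr_apply_apply]
  refine ⟨by fun_prop, ?_⟩
  rw [hcomp, ← Measure.map_map (by fun_prop) (by fun_prop),
    ← Measure.map_map (by fun_prop) (by fun_prop), map_pi_eq_stdGaussian, stdGaussian_map b.repr,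
    ← map_pi_eq_stdGaussian, Measure.map_map (by fun_prop) (by fun_prop)]
  exact Measure.map_id

end GaussianChaos

section QuadraticForms

variable {ι : Type*} [Fintype ι] {M : Matrix ι ι ℝ}

theorem frobenius_norm_sq_eq_sum {κ : Type*} [Fintype κ] (A : Matrix κ ι ℝ) :
    ‖A‖ ^ 2 = ∑ i, ∑ j, A i j ^ 2 := by
  rw [Matrix.frobenius_norm_def, ← Real.sqrt_eq_rpow, Real.sq_sqrt (by positivity)]
  simp

theorem frobenius_norm_sq_eq_trace_transpose_mul_self {κ : Type*} [Fintype κ]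
    (A : Matrix κ ι ℝ) : ‖A‖ ^ 2 = trace (Aᵀ * A) := by
  rw [frobenius_norm_sq_eq_sum, Finset.sum_comm]
  simp [trace, Matrix.mul_apply, sq]

theorem abs_trace_le_sqrt_card_mul_frobenius_norm (M : Matrix ι ι ℝ) :
    |trace M| ≤ √(Fintype.card ι) * ‖M‖ := by
  have hdiag : ∑ i, M i i ^ 2 ≤ ‖M‖ ^ 2 := by
    rw [frobenius_norm_sq_eq_sum]
    exact Finset.sum_le_sum fun i _ =>
      Finset.single_le_sum (f := fun j => M i j ^ 2) (fun j _ => sq_nonneg _) (Finset.mem_univ i)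
  have hsq : trace M ^ 2 ≤ Fintype.card ι * ‖M‖ ^ 2 :=
    (sq_sum_le_card_mul_sum_sq (s := Finset.univ) (f := fun i => M i i)).trans
      (mul_le_mul_of_nonneg_left hdiag (by positivity))
  simpa [Real.sqrt_mul, Real.sqrt_sq (norm_nonneg M)] using Real.abs_le_sqrt hsq

section Spectral

variable [DecidableEq ι]

theorem dotProduct_mulVec_self_eq_sum_eigenvalues (hM : M.IsHermitian) (w : ι → ℝ) :
    w ⬝ᵥ M *ᵥ w = ∑ i, hM.eigenvalues i * ⟪hM.eigenvectorBasis i, WithLp.toLp 2 w⟫ ^ 2 := by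
  have hsymm : Mᵀ = M := by simpa using hM.eq
  have hcoord (i : ι) : ⟪hM.eigenvectorBasis i, WithLp.toLp 2 (M *ᵥ w)⟫ =
      hM.eigenvalues i * ⟪hM.eigenvectorBasis i, WithLp.toLp 2 w⟫ := by
    simp only [EuclideanSpace.inner_eq_star_dotProduct, star_trivial]
    rw [dotProduct_comm, dotProduct_mulVec, ← mulVec_transpose, hsymm, hM.mulVec_eigenvectorBasis,
      smul_dotProduct, smul_eq_mul, dotProduct_comm]
  calc w ⬝ᵥ M *ᵥ w = ⟪WithLp.toLp 2 w, WithLp.toLp 2 (M *ᵥ w)⟫ := by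
        simp [EuclideanSpace.inner_eq_star_dotProduct, dotProduct_comm]
    _ = ∑ i, hM.eigenvalues i * ⟪hM.eigenvectorBasis i, WithLp.toLp 2 w⟫ ^ 2 := by
        rw [← hM.eigenvectorBasis.sum_inner_mul_inner]
        refine Finset.sum_congr rfl fun i _ => ?_
        rw [hcoord, real_inner_comm]
        ring

theorem frobenius_norm_sq_eq_sum_eigenvalues_sq (hM : M.IsHermitian) :
    ‖M‖ ^ 2 = ∑ i, hM.eigenvalues i ^ 2 := by
  have hsymm : Mᵀ = M := by simpa using hM.eq
  rw [frobenius_norm_sq_eq_trace_transpose_mul_self, hsymm]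
  conv_lhs => rw [hM.spectral_theorem]
  rw [← map_mul, Unitary.conjStarAlgAut_apply, trace_mul_cycle, Unitary.coe_star_mul_self,
    one_mul, diagonal_mul_diagonal, trace_diagonal]
  simp [sq]

end Spectral

section HansonWright

variable {r : ℝ}

theorem measureReal_pi_le_dotProduct_mulVec_sub_trace_le (hM : M.IsHermitian) (hM₀ : M ≠ 0)
    (hr : 0 ≤ r) :
    (Measure.pi fun _ : ι => gaussianReal 0 1).real {w | r * ‖M‖ ≤ w ⬝ᵥ M *ᵥ w - trace M} ≤
      Real.exp (-(min (r ^ 2) r / 16)) := by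
  classical
  have hrotate : {w : ι → ℝ | r * ‖M‖ ≤ w ⬝ᵥ M *ᵥ w - trace M} =
      (fun w i => ⟪hM.eigenvectorBasis i, WithLp.toLp 2 w⟫) ⁻¹'
        {w | r * ‖M‖ ≤ ∑ i, hM.eigenvalues i * (w i ^ 2 - 1)} := by
    ext w
    simp [dotProduct_mulVec_self_eq_sum_eigenvalues hM, hM.trace_eq_sum_eigenvalues, mul_sub]
  have hmeas : MeasurableSet {w : ι → ℝ | r * ‖M‖ ≤ ∑ i, hM.eigenvalues i * (w i ^ 2 - 1)} :=
    measurableSet_le (by fun_prop) (by fun_prop)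
  rw [hrotate, (measurePreserving_inner_orthonormalBasis _).measureReal_preimage
    hmeas.nullMeasurableSet]
  exact measureReal_pi_le_sum_mul_sq_sub_one_le (norm_pos_iff.2 hM₀)
    (frobenius_norm_sq_eq_sum_eigenvalues_sq hM).symm hr

theorem measureReal_pi_lt_abs_dotProduct_mulVec_sub_trace_le_of_isHermitian
    (hM : M.IsHermitian) (hr : 0 ≤ r) :
    (Measure.pi fun _ : ι => gaussianReal 0 1).real {w | r * ‖M‖ < |w ⬝ᵥ M *ᵥ w - trace M|} ≤
      2 * Real.exp (-(min (r ^ 2) r / 16)) := by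
  rcases eq_or_ne M 0 with rfl | hM₀
  · simpa using (Real.exp_pos _).le
  refine measureReal_lt_abs_le
    (measureReal_pi_le_dotProduct_mulVec_sub_trace_le hM hM₀ hr) ?_
  simpa [neg_mulVec, add_comm, ← sub_eq_add_neg] using
    measureReal_pi_le_dotProduct_mulVec_sub_trace_le hM.neg (neg_ne_zero.2 hM₀) hr

theorem measureReal_pi_lt_abs_dotProduct_mulVec_sub_trace_le (M : Matrix ι ι ℝ) (hr : 0 ≤ r) :
    (Measure.pi fun _ : ι => gaussianReal 0 1).real {w | r * ‖M‖ < |w ⬝ᵥ M *ᵥ w - trace M|} ≤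
      2 * Real.exp (-(min (r ^ 2) r / 16)) := by
  -- Neither the quadratic form nor the trace sees the antisymmetric part of `M`.
  set S : Matrix ι ι ℝ := (1 / 2 : ℝ) • (M + Mᵀ) with hS
  have hSymm : S.IsHermitian := by
    simp [S, Matrix.IsHermitian, add_comm]
  have hquad (w : ι → ℝ) : w ⬝ᵥ S *ᵥ w = w ⬝ᵥ M *ᵥ w := by
    have htranspose : w ⬝ᵥ Mᵀ *ᵥ w = w ⬝ᵥ M *ᵥ w := by
      rw [mulVec_transpose, dotProduct_comm, ← dotProduct_mulVec]
    rw [hS, smul_mulVec, add_mulVec, dotProduct_smul, dotProduct_add, htranspose, smul_eq_mul]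
    ring
  have htrace : trace S = trace M := by
    rw [hS, trace_smul, trace_add, trace_transpose, smul_eq_mul]
    ring
  have hnorm : ‖S‖ ≤ ‖M‖ := by
    have := norm_add_le M Mᵀ
    rw [Matrix.frobenius_norm_transpose] at this
    rw [hS, norm_smul, Real.norm_of_nonneg (by norm_num)]
    linarith
  refine (measureReal_mono fun w hw => ?_).trans
    (measureReal_pi_lt_abs_dotProduct_mulVec_sub_trace_le_of_isHermitian hSymm hr)
  simp only [Set.mem_ofPred_eq, hquad, htrace] at hw ⊢
  exact (mul_le_mul_of_nonneg_left hnorm hr).trans_lt hw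

end HansonWright

end QuadraticForms

section RandomQuadraticForms

variable {κ ι : Type*} [Fintype κ] [Fintype ι]

theorem abs_average_mul_sub_mul_le [Nonempty κ] {a q : κ → ℝ} {A δ m η τ : ℝ}
    (ha : ∀ k, |a k| ≤ A) (hq : ∀ k, |q k - τ| ≤ δ)
    (hm : |(Fintype.card κ : ℝ)⁻¹ * ∑ k, a k - m| ≤ η) :
    |(Fintype.card κ : ℝ)⁻¹ * ∑ k, a k * q k - m * τ| ≤ A * δ + η * |τ| := by
  have hA₀ : 0 ≤ A := (abs_nonneg _).trans (ha (Classical.arbitrary κ))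
  have hsplit : (Fintype.card κ : ℝ)⁻¹ * ∑ k, a k * q k - m * τ =
      (Fintype.card κ : ℝ)⁻¹ * ∑ k, a k * (q k - τ) +
        ((Fintype.card κ : ℝ)⁻¹ * ∑ k, a k - m) * τ := by
    simp only [mul_sub, Finset.sum_sub_distrib, ← Finset.sum_mul]
    ring
  have hfluct : |(Fintype.card κ : ℝ)⁻¹ * ∑ k, a k * (q k - τ)| ≤ A * δ := by
    rw [abs_mul, abs_of_nonneg (by positivity), inv_mul_le_iff₀ (by positivity)]
    calc |∑ k, a k * (q k - τ)| ≤ ∑ k, |a k * (q k - τ)| := Finset.abs_sum_le_sum_abs _ _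
      _ ≤ ∑ _k : κ, A * δ := by
          refine Finset.sum_le_sum fun k _ => ?_
          rw [abs_mul]
          exact mul_le_mul (ha k) (hq k) (abs_nonneg _) hA₀
      _ = Fintype.card κ * (A * δ) := by simp
  rw [hsplit]
  refine (abs_add_le _ _).trans (add_le_add hfluct ?_)
  rw [abs_mul]
  gcongr

theorem half_min_le_min_div_sixteen (s : ℝ) :
    1 / 2 * min (s ^ 2) s ≤ min ((8 * s) ^ 2) (8 * s) / 16 := by
  rcases min_cases ((8 * s) ^ 2) (8 * s) with ⟨h, -⟩ | ⟨h, -⟩ <;> rw [h]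
  · nlinarith [min_le_left (s ^ 2) s]
  · linarith [min_le_right (s ^ 2) s]

variable {f : (ι → ℝ) → ℝ} {A t : ℝ}

theorem measureReal_pi_exists_lt_abs_dotProduct_mulVec_sub_trace_le (M : Matrix ι ι ℝ)
    (ht : 0 ≤ t) :
    (Measure.pi fun _ : κ => Measure.pi fun _ : ι => gaussianReal 0 1).real
        {W | ∃ k, 8 * (t * √(Fintype.card κ)) * ‖M‖ < |W k ⬝ᵥ M *ᵥ W k - trace M|} ≤
      Fintype.card κ * (2 * Real.exp
        (-(1 / 2) * min (t ^ 2 * Fintype.card κ) (t * √(Fintype.card κ)))) := by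
  set s := t * √(Fintype.card κ)
  have hs_sq : s ^ 2 = t ^ 2 * Fintype.card κ := by
    rw [mul_pow, Real.sq_sqrt (by positivity)]
  have hmeas : MeasurableSet {w : ι → ℝ | 8 * s * ‖M‖ < |w ⬝ᵥ M *ᵥ w - trace M|} := by
    refine measurableSet_lt measurable_const (Continuous.measurable ?_)
    fun_prop
  refine (measureReal_pi_exists_mem_le hmeas).trans ?_
  gcongr
  refine (measureReal_pi_lt_abs_dotProduct_mulVec_sub_trace_le M (by positivity)).trans ?_
  rw [← hs_sq]
  gcongr
  linarith [half_min_le_min_div_sixteen s]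

theorem ofReal_le_pi_abs_average_mul_dotProduct_mulVec_sub_le [Nonempty κ]
    (hf : Measurable f) (hA : ∀ w, |f w| ≤ A) (ht : 0 ≤ t) {m δ : ℝ}
    (hm : |∫ w, f w ∂(Measure.pi fun _ : ι => gaussianReal 0 1) - m| ≤ δ) (M : Matrix ι ι ℝ) :
    ENNReal.ofReal (1 - (2 * Fintype.card κ + 2) * Real.exp
        (-(1 / 2) * min (t ^ 2 * Fintype.card κ) (t * √(Fintype.card κ)))) ≤
      (Measure.pi fun _ : κ => Measure.pi fun _ : ι => gaussianReal 0 1)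
        {W | |(Fintype.card κ : ℝ)⁻¹ * ∑ k, f (W k) * (W k ⬝ᵥ M *ᵥ W k) - m * trace M| ≤
          (8 * A * (t * √(Fintype.card κ)) + (A * t + δ) * √(Fintype.card ι)) * ‖M‖} := by
  set P := Measure.pi fun _ : κ => Measure.pi fun _ : ι => gaussianReal 0 1
  set I := ∫ w, f w ∂(Measure.pi fun _ : ι => gaussianReal 0 1)
  set p := Real.exp (-(1 / 2) * min (t ^ 2 * Fintype.card κ) (t * √(Fintype.card κ))) with hp
  set badAverage := {W : κ → ι → ℝ | A * t < |(Fintype.card κ : ℝ)⁻¹ * ∑ k, f (W k) - I|}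
  set badRow :=
    {W : κ → ι → ℝ | ∃ k, 8 * (t * √(Fintype.card κ)) * ‖M‖ < |W k ⬝ᵥ M *ᵥ W k - trace M|}
  have hbadAverage : P.real badAverage ≤ 2 * p := by
    refine (measureReal_pi_lt_abs_average_sub_integral_le hf hA ht).trans ?_
    rw [hp]
    gcongr 2 * Real.exp ?_
    linarith [min_le_left (t ^ 2 * Fintype.card κ) (t * √(Fintype.card κ))]
  have hbadRow : P.real badRow ≤ Fintype.card κ * (2 * p) :=
    measureReal_pi_exists_lt_abs_dotProduct_mulVec_sub_trace_le M ht
  refine ofReal_one_sub_le_measure (T := badAverage ∪ badRow) (fun W hW => ?_) ?_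
  · contrapose! hW
    simp only [badAverage, badRow, Set.mem_union, Set.mem_ofPred_eq, not_or, not_lt, not_exists,
      Set.notMem_compl_iff] at hW ⊢
    obtain ⟨haverage, hrow⟩ := hW
    refine (abs_average_mul_sub_mul_le (fun k => hA (W k)) hrow
      ((abs_sub_le _ I _).trans (add_le_add haverage hm))).trans ?_
    have hη : 0 ≤ A * t + δ :=
      add_nonneg ((abs_nonneg _).trans haverage) ((abs_nonneg _).trans hm)
    linarith [mul_le_mul_of_nonneg_left (abs_trace_le_sqrt_card_mul_frobenius_norm M) hη]
  · linarith [measureReal_union_le (μ := P) badAverage badRow]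

end RandomQuadraticForms

section TraceConcentration

variable {d dc : ℕ}

theorem sqrt_frobSq_eq_norm (M : Matrix (Fin d) (Fin dc) ℝ) : √(frobSq M) = ‖M‖ := by
  rw [frobSq, ← frobenius_norm_sq_eq_sum, Real.sqrt_sq (norm_nonneg M)]

theorem trace_diagonal_mul_of_mul_transpose_mul_diagonal {κ ι : Type*} [Fintype κ]
    [DecidableEq κ] [Fintype ι] (a b : κ → ℝ) (W : κ → ι → ℝ) (M : Matrix ι ι ℝ) :
    trace (diagonal a * of W * M * (of W)ᵀ * diagonal b) =
      ∑ k, a k * b k * (W k ⬝ᵥ M *ᵥ W k) := by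
  refine Finset.sum_congr rfl fun k _ => ?_
  have hrow : (of W * M * (of W)ᵀ) k k = W k ⬝ᵥ M *ᵥ W k := by
    rw [Matrix.mul_assoc]
    rfl
  rw [diag_apply, mul_diagonal, Matrix.mul_assoc, Matrix.mul_assoc, diagonal_mul,
    ← Matrix.mul_assoc, hrow]
  ring

theorem integral_comp_toLp_gaussianVec {f : EuclideanSpace ℝ (Fin d) → ℝ} (hf : Measurable f) :
    ∫ w, f (WithLp.toLp 2 w) ∂gaussianVec d =
      ∫ v, f v ∂ProbabilityTheory.stdGaussian (EuclideanSpace ℝ (Fin d)) := by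
  rw [← map_pi_eq_stdGaussian, integral_map (by fun_prop) hf.aestronglyMeasurable]

theorem inner_toLp_toLp_eq_sum (x w : Fin d → ℝ) :
    ⟪WithLp.toLp 2 x, WithLp.toLp 2 w⟫ = ∑ i, w i * x i := by
  simp [PiLp.inner_apply]

variable {L : ℝ≥0} {s : ℝ → ℝ} {x y : Fin d → ℝ} {ε t : ℝ}

theorem abs_integral_gaussianVec_sq_sub_le (hL : ∀ z, |s z| ≤ L) (hs : LipschitzWith L s)
    (hx : |(∑ i, x i ^ 2) - 1| ≤ ε) :
    |∫ w, s (∑ i, w i * x i) * s (∑ i, w i * x i) ∂gaussianVec d -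
        ∫ z, s z ^ 2 ∂gaussianReal 0 1| ≤ 2 * L ^ 2 * ε := by
  have hsc := hs.continuous
  have h := abs_integral_sq_comp_inner_sub_le hL hs (ε := ε) (x := WithLp.toLp 2 x)
    (by rwa [EuclideanSpace.real_norm_sq_eq])
  rw [← integral_comp_toLp_gaussianVec (Continuous.measurable (by fun_prop))] at h
  simpa only [inner_toLp_toLp_eq_sum, sq (s (∑ _, _))] using h

theorem abs_integral_gaussianVec_mul_sub_sq_le (hL : ∀ z, |s z| ≤ L) (hs : LipschitzWith L s)
    (hx : |(∑ i, x i ^ 2) - 1| ≤ ε) (hy : |(∑ i, y i ^ 2) - 1| ≤ ε)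
    (hxy : |∑ i, x i * y i| ≤ ε) :
    |∫ w, s (∑ i, w i * x i) * s (∑ i, w i * y i) ∂gaussianVec d -
        (∫ z, s z ∂gaussianReal 0 1) ^ 2| ≤ 6 * L ^ 2 * ε := by
  have hsc := hs.continuous
  have h := abs_integral_mul_comp_inner_sub_sq_le hL hs (ε := ε) (x := WithLp.toLp 2 x)
    (y := WithLp.toLp 2 y) (by rwa [EuclideanSpace.real_norm_sq_eq])
    (by rwa [EuclideanSpace.real_norm_sq_eq]) (by rwa [real_inner_comm, inner_toLp_toLp_eq_sum])
  rw [← integral_comp_toLp_gaussianVec (Continuous.measurable (by fun_prop))] at h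
  simpa only [inner_toLp_toLp_eq_sum] using h

theorem ofReal_le_gaussianMat_abs_trace_diagonal_mul_diagonal_sub_le (hs : Measurable s)
    (hL : ∀ z, |s z| ≤ L) (hε : 0 ≤ ε) (ht : 0 ≤ t) {m : ℝ}
    (hm : |∫ w, s (∑ i, w i * x i) * s (∑ i, w i * y i) ∂gaussianVec d - m| ≤ 6 * L ^ 2 * ε) :
    ENNReal.ofReal (1 - 2 * Real.exp (-(1 / 2) * dc * t ^ 2)) ≤
      gaussianMat dc d
        {W | |(dc : ℝ)⁻¹ * trace (diagonal (fun k => s (∑ i, W k i * x i)) *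
          diagonal (fun k => s (∑ i, W k i * y i))) - m| ≤ 8 * L ^ 2 * (ε + t)} := by
  rcases eq_or_ne dc 0 with rfl | hdc
  · norm_num [ENNReal.ofReal_of_nonpos]
  have : NeZero dc := ⟨hdc⟩
  have h := ofReal_le_pi_abs_average_sub_le (κ := Fin dc)
    (f := fun w : Fin d → ℝ => s (∑ i, w i * x i) * s (∑ i, w i * y i)) (by fun_prop)
    (fun w => abs_mul_le_sq_of_abs_le hL _ _) ht hm
  rw [Fintype.card_fin] at h
  refine h.trans (measure_mono fun W hW => ?_)
  simp only [Set.mem_ofPred_eq, diagonal_mul_diagonal, trace_diagonal] at hW ⊢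
  linarith [mul_nonneg (sq_nonneg (L : ℝ)) hε, mul_nonneg (sq_nonneg (L : ℝ)) ht]

theorem ofReal_le_gaussianMat_abs_trace_diagonal_mul_of_mul_transpose_mul_diagonal_sub_le
    (hs : Measurable s) (hL : ∀ z, |s z| ≤ L) (hε : 0 ≤ ε) (ht : 0 ≤ t) {m : ℝ}
    (hm : |∫ w, s (∑ i, w i * x i) * s (∑ i, w i * y i) ∂gaussianVec d - m| ≤ 6 * L ^ 2 * ε)
    (M : Matrix (Fin d) (Fin d) ℝ) :
    ENNReal.ofReal (1 - (2 * dc + 2) * Real.exp (-(1 / 2) * min (t ^ 2 * dc) (t * √dc))) ≤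
      gaussianMat dc d
        {W | |(dc : ℝ)⁻¹ * trace (diagonal (fun k => s (∑ i, W k i * x i)) * of W * M * (of W)ᵀ *
            diagonal (fun k => s (∑ i, W k i * y i))) - m * trace M| ≤
          8 * L ^ 2 * (ε * √d + t * √d + t * √dc) * √(frobSq M)} := by
  rcases eq_or_ne dc 0 with rfl | hdc
  · norm_num [ENNReal.ofReal_of_nonpos]
  have : NeZero dc := ⟨hdc⟩
  have h := ofReal_le_pi_abs_average_mul_dotProduct_mulVec_sub_le (κ := Fin dc)
    (f := fun w : Fin d → ℝ => s (∑ i, w i * x i) * s (∑ i, w i * y i)) (by fun_prop)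
    (fun w => abs_mul_le_sq_of_abs_le hL _ _) ht hm M
  rw [Fintype.card_fin, Fintype.card_fin] at h
  refine h.trans (measure_mono fun W hW => ?_)
  simp only [Set.mem_ofPred_eq, trace_diagonal_mul_of_mul_transpose_mul_diagonal,
    sqrt_frobSq_eq_norm] at hW ⊢
  refine hW.trans (mul_le_mul_of_nonneg_right ?_ (norm_nonneg M))
  have hεd : 0 ≤ (L : ℝ) ^ 2 * (ε * √d) := by positivity
  have htd : 0 ≤ (L : ℝ) ^ 2 * (t * √d) := by positivity
  linarith

end TraceConcentration

theorem trace_approximations_general {d dc : ℕ} {lam : ℝ≥0} {s : ℝ → ℝ} {x y : Fin d → ℝ}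
    {ε t : ℝ} (hlam : ∀ z, |s z| ≤ lam) (hs : LipschitzWith lam s)
    (hx : |(∑ i, x i ^ 2) - 1| ≤ ε) (hy : |(∑ i, y i ^ 2) - 1| ≤ ε)
    (hxy : |∑ i, x i * y i| ≤ ε) (ht : 0 ≤ t) :
    (gaussianMat dc d
        {W | |(dc : ℝ)⁻¹ * trace (diagonal (fun k => s (∑ i, W k i * x i)) *
            diagonal (fun k => s (∑ i, W k i * y i))) - (∫ z, s z ∂stdGaussian) ^ 2| ≤
          8 * lam ^ 2 * (ε + t)} ≥
      ENNReal.ofReal (1 - 2 * Real.exp (-(1 / 2) * dc * t ^ 2))) ∧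
    (∀ M : Matrix (Fin d) (Fin d) ℝ, gaussianMat dc d
        {W | |(dc : ℝ)⁻¹ * trace (diagonal (fun k => s (∑ i, W k i * x i)) * of W * M * (of W)ᵀ *
            diagonal (fun k => s (∑ i, W k i * y i))) -
            (∫ z, s z ∂stdGaussian) ^ 2 * trace M| ≤
          8 * lam ^ 2 * (ε * √d + t * √d + t * √dc) * √(frobSq M)} ≥
      ENNReal.ofReal (1 - (2 * (dc : ℝ) + 2) *
        Real.exp (-(1 / 2) * min (t ^ 2 * dc) (t * √dc)))) ∧
    (gaussianMat dc d
        {W | |(dc : ℝ)⁻¹ * trace (diagonal (fun k => s (∑ i, W k i * x i)) *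
            diagonal (fun k => s (∑ i, W k i * x i))) - ∫ z, s z ^ 2 ∂stdGaussian| ≤
          8 * lam ^ 2 * (ε + t)} ≥
      ENNReal.ofReal (1 - 2 * Real.exp (-(1 / 2) * dc * t ^ 2))) ∧
    (∀ M : Matrix (Fin d) (Fin d) ℝ, gaussianMat dc d
        {W | |(dc : ℝ)⁻¹ * trace (diagonal (fun k => s (∑ i, W k i * x i)) * of W * M * (of W)ᵀ *
            diagonal (fun k => s (∑ i, W k i * x i))) -
            (∫ z, s z ^ 2 ∂stdGaussian) * trace M| ≤
          8 * lam ^ 2 * (ε * √d + t * √d + t * √dc) * √(frobSq M)} ≥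
      ENNReal.ofReal (1 - (2 * (dc : ℝ) + 2) *
        Real.exp (-(1 / 2) * min (t ^ 2 * dc) (t * √dc)))) := by
  have hε : 0 ≤ ε := (abs_nonneg _).trans hx
  have hmeas : Measurable s := hs.continuous.measurable
  have hoff := abs_integral_gaussianVec_mul_sub_sq_le hlam hs hx hy hxy
  have hdiag : |∫ w, s (∑ i, w i * x i) * s (∑ i, w i * x i) ∂gaussianVec d -
      ∫ z, s z ^ 2 ∂gaussianReal 0 1| ≤ 6 * lam ^ 2 * ε :=
    (abs_integral_gaussianVec_sq_sub_le hlam hs hx).trans (by gcongr; norm_num)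
  exact ⟨ofReal_le_gaussianMat_abs_trace_diagonal_mul_diagonal_sub_le hmeas hlam hε ht hoff,
    ofReal_le_gaussianMat_abs_trace_diagonal_mul_of_mul_transpose_mul_diagonal_sub_le
      hmeas hlam hε ht hoff,
    ofReal_le_gaussianMat_abs_trace_diagonal_mul_diagonal_sub_le hmeas hlam hε ht hdiag,
    ofReal_le_gaussianMat_abs_trace_diagonal_mul_of_mul_transpose_mul_diagonal_sub_le
      hmeas hlam hε ht hdiag⟩

theorem trace_approximations :
    ∃ C : ℝ, 0 < C ∧ ∃ c : ℝ, 0 < c ∧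
      ∀ (d n dc : ℕ) (X : Matrix (Fin d) (Fin n) ℝ) (ε B lamσ : ℝ)
        (σ σ' σ'' : ℝ → ℝ),
        (∀ x, HasDerivAt σ (σ' x) x) →
        (∀ x, HasDerivAt σ' (σ'' x) x) →
        (∀ x, |σ' x| ≤ lamσ) →
        (∀ x, |σ'' x| ≤ lamσ) →
        (∫ x, σ x ∂stdGaussian) = 0 →
        (∫ x, (σ x) ^ 2 ∂stdGaussian) = 1 →
        IsOrthonormal ε B X →
        ∀ α β : Fin n, α ≠ β → ∀ t : ℝ, 0 < t →
        -- (a) off-diagonal version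
        (gaussianMat dc d
            {W | |(dc : ℝ)⁻¹ *
                Matrix.trace (Matrix.diagonal (fun k : Fin dc => σ' (∑ i, W k i * X i α)) *
                  Matrix.diagonal (fun k : Fin dc => σ' (∑ i, W k i * X i β))) -
                (∫ x, σ' x ∂stdGaussian) ^ 2| ≤ C * lamσ ^ 2 * (ε + t)} ≥
          ENNReal.ofReal (1 - 2 * Real.exp (-c * dc * t ^ 2))) ∧
        -- (b) version with a deterministic symmetric matrix M
        (∀ M : Matrix (Fin d) (Fin d) ℝ, Mᵀ = M →
          gaussianMat dc d
              {W | |(dc : ℝ)⁻¹ *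
                  Matrix.trace (Matrix.diagonal (fun k : Fin dc => σ' (∑ i, W k i * X i α)) *
                    Matrix.of W * M * (Matrix.of W)ᵀ *
                    Matrix.diagonal (fun k : Fin dc => σ' (∑ i, W k i * X i β))) -
                  (∫ x, σ' x ∂stdGaussian) ^ 2 * Matrix.trace M| ≤
                C * lamσ ^ 2 * (ε * Real.sqrt d + t * Real.sqrt d + t * Real.sqrt dc) *
                  Real.sqrt (frobSq M)} ≥
            ENNReal.ofReal
              (1 - (2 * (dc : ℝ) + 2) *
                Real.exp (-c * min (t ^ 2 * dc) (t * Real.sqrt dc)))) ∧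
        -- (a) diagonal version, with `a_σ` in place of `b_σ²`
        (gaussianMat dc d
            {W | |(dc : ℝ)⁻¹ *
                Matrix.trace (Matrix.diagonal (fun k : Fin dc => σ' (∑ i, W k i * X i α)) *
                  Matrix.diagonal (fun k : Fin dc => σ' (∑ i, W k i * X i α))) -
                (∫ x, (σ' x) ^ 2 ∂stdGaussian)| ≤ C * lamσ ^ 2 * (ε + t)} ≥
          ENNReal.ofReal (1 - 2 * Real.exp (-c * dc * t ^ 2))) ∧
        -- (b) diagonal version, with `a_σ` in place of `b_σ²`
        (∀ M : Matrix (Fin d) (Fin d) ℝ, Mᵀ = M →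
          gaussianMat dc d
              {W | |(dc : ℝ)⁻¹ *
                  Matrix.trace (Matrix.diagonal (fun k : Fin dc => σ' (∑ i, W k i * X i α)) *
                    Matrix.of W * M * (Matrix.of W)ᵀ *
                    Matrix.diagonal (fun k : Fin dc => σ' (∑ i, W k i * X i α))) -
                  (∫ x, (σ' x) ^ 2 ∂stdGaussian) * Matrix.trace M| ≤
                C * lamσ ^ 2 * (ε * Real.sqrt d + t * Real.sqrt d + t * Real.sqrt dc) *
                  Real.sqrt (frobSq M)} ≥
            ENNReal.ofReal
              (1 - (2 * (dc : ℝ) + 2) *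
                Real.exp (-c * min (t ^ 2 * dc) (t * Real.sqrt dc)))) := by
  refine ⟨8, by norm_num, 1 / 2, by norm_num, ?_⟩
  intro d n dc X ε B lamσ σ σ' σ'' _ hσ'' hlam' hlam'' _ _ hX α β hαβ t ht
  lift lamσ to ℝ≥0 using (abs_nonneg _).trans (hlam' 0)
  have hlip : LipschitzWith lamσ σ' :=
    lipschitzWith_of_nnnorm_deriv_le (fun z => (hσ'' z).differentiableAt) fun z => by
      rw [(hσ'' z).deriv]
      exact hlam'' z
  obtain ⟨hcol, hcols, -, -⟩ := hX
  obtain ⟨hoff, hoffM, hdiag, hdiagM⟩ := trace_approximations_general (dc := dc) hlam' hlip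
    (hcol α) (hcol β) (hcols α β hαβ) ht.le
  exact ⟨hoff, fun M _ => hoffM M, hdiag, fun M _ => hdiagM M⟩
end
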